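/- Let n ≥ 3 be an integer and set χ = χ_k^{n−2}. Let f ∈ M^{!,∞}_{2−n}(D,χ) have Fourier coefficients c(m), and assume c(m) ∈ ℤ for all m ≤ 0. Then c(m) ∈ ℚ for all m ∈ ℤ. -/

import Mathlib

/-!
Statement 4 (part of Corollary 5.1.3): for `n ≥ 3` and `χ = χ_k^{n-2}` (where `χ_k` is the
quadratic character attached to the imaginary quadratic field `k` of odd discriminant `-D`),
a form `f ∈ M^{!,∞}_{2-n}(D,χ)` whose Fourier coefficients `c(m)` are integers for `m ≤ 0`
has all its Fourier coefficients rational.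
-/

noncomputable section

/-- The complex upper half plane, as a subset of `ℂ`. -/
def UHP : Set ℂ := {z : ℂ | 0 < z.im}

/-- A `2 × 2` integer matrix viewed as a real matrix. -/
def matR (g : Matrix (Fin 2) (Fin 2) ℤ) : Matrix (Fin 2) (Fin 2) ℝ :=
  g.map fun x => (x : ℝ)

/-- The weight `w` slash action of a real `2 × 2` matrix `g = [[a,b],[c,d]]` (of positive
determinant) on functions: `(f ∣[w] g)(τ) = det(g)^{w/2} (cτ+d)^{-w} f((aτ+b)/(cτ+d))`. -/
def slash (w : ℤ) (g : Matrix (Fin 2) (Fin 2) ℝ) (f : ℂ → ℂ) : ℂ → ℂ := fun τ =>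
  (Real.sqrt g.det : ℂ) ^ w * ((g 1 0 : ℂ) * τ + (g 1 1 : ℂ)) ^ (-w) *
    f (((g 0 0 : ℂ) * τ + (g 0 1 : ℂ)) / ((g 1 0 : ℂ) * τ + (g 1 1 : ℂ)))

/-- `χ : ℤ → ℂ` is a quadratic Dirichlet character modulo `D`. -/
structure IsQuadDirChar (D : ℕ) (χ : ℤ → ℂ) : Prop where
  periodic : ∀ a : ℤ, χ (a + D) = χ a
  mul : ∀ a b : ℤ, χ (a * b) = χ a * χ b
  eq_zero_iff : ∀ a : ℤ, χ a = 0 ↔ ¬ IsCoprime a (D : ℤ)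
  sq_vals : ∀ a : ℤ, χ a = 0 ∨ χ a = 1 ∨ χ a = -1

/-- `f : ℍ → ℂ` is a weakly holomorphic modular form of weight `w`, level `Γ₀(D)`, character
`χ`, holomorphic outside the cusp `∞`, with Fourier coefficients `c`; i.e. `f ∈ M^{!,∞}_w(D,χ)`.
Only the restriction of `f` to the upper half plane matters. -/
structure IsWeaklyHolInfty (D : ℕ) (χ : ℤ → ℂ) (w : ℤ) (f : ℂ → ℂ) (c : ℤ → ℂ) : Prop where
  holo : DifferentiableOn ℂ f UHP
  transform : ∀ γ : Matrix.SpecialLinearGroup (Fin 2) ℤ, (D : ℤ) ∣ γ 1 0 →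
    ∀ τ ∈ UHP, slash w (matR γ) f τ = χ (γ 1 1) * f τ
  coeff_bddBelow : ∃ m₀ : ℤ, ∀ m : ℤ, m < -m₀ → c m = 0
  fourier : ∀ τ ∈ UHP,
    HasSum (fun m : ℤ => c m * Complex.exp (2 * (Real.pi : ℂ) * Complex.I * m * τ)) (f τ)
  bdd_at_other_cusps : ∀ γ : Matrix.SpecialLinearGroup (Fin 2) ℤ, ¬ (D : ℤ) ∣ γ 1 0 →
    ∃ C : ℝ, ∀ τ : ℂ, 1 ≤ τ.im → ‖slash w (matR γ) f τ‖ ≤ C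

/-- An odd nonnegative representative of `a` modulo `D` (for odd `D`). -/
def oddRep (D : ℕ) (a : ℤ) : ℕ :=
  if (a % (D : ℤ)).toNat % 2 = 1 then (a % (D : ℤ)).toNat else (a % (D : ℤ)).toNat + D

/-- The quadratic Dirichlet character `χ_k` modulo `D` attached to the imaginary quadratic field
`k` of discriminant `-D`: it is determined by `χ_k(a) = J(-D | a)` (Jacobi symbol) for positive
integers `a` coprime to `D`, extended to `ℤ` by periodicity modulo `D`. -/
def chiK (D : ℕ) (a : ℤ) : ℤ := jacobiSym (-(D : ℤ)) (oddRep D a)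

/-!
A ring endomorphism `σ` of `ℂ` acts on modular forms through their `q`-series. In level one the
conjugate of a form is again a form, because each weight is spanned by forms with rational
coefficients. The step to level `Γ₀(D)` goes by interpolation: a form `F` is determined by its
`SL(2, ℤ)`-translates, which Lagrange interpolation at the translates of a rational Eisenstein
series `H` packs into a polynomial with level-one coefficients, so that conjugating these
coefficients yields a quotient whose `q`-series is the conjugate of that of `F`. The quotient has no
poles, since `F²` is integral over the ring of level-one forms and this survives conjugation.

If `f` has its only poles at `∞`, then multiplying by powers of `Δ` and of `H`, which vanish at `∞`
while `H` vanishes at no other cusp, shows that its conjugate `f^σ` is of the same kind. When the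
principal parts of `f` and `f^σ` agree, `f - f^σ` is a holomorphic form of nonpositive weight, hence
zero. So every coefficient is fixed by every automorphism of `ℂ`, and is therefore rational.
-/

/-! ### Complex numbers fixed by all automorphisms -/

section FixedByAutomorphisms

open Cardinal Polynomial

universe u

lemma exists_ringEquiv_algebraMap_eq {R : Type*} {K L : Type u} [CommRing R] [IsDomain R]
    [Countable R] [Field K] [Field L] [Algebra R K] [Algebra R L] [IsAlgClosed K] [IsAlgClosed L]
    [FaithfulSMul R K] [FaithfulSMul R L] (hK : ℵ₀ < #K) (hKL : #K = #L) :
    ∃ σ : K ≃+* L, ∀ r : R, σ (algebraMap R K r) = algebraMap R L r := by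
  obtain ⟨s, hs⟩ := exists_isTranscendenceBasis R K
  obtain ⟨t, ht⟩ := exists_isTranscendenceBasis R L
  have hst : #s = #t := by
    rw [← lift_inj,
      ← IsAlgClosed.cardinal_eq_cardinal_transcendence_basis_of_aleph0_lt _ hs mk_le_aleph0 hK,
      ← IsAlgClosed.cardinal_eq_cardinal_transcendence_basis_of_aleph0_lt _ ht mk_le_aleph0
        (hKL ▸ hK), hKL]
  obtain ⟨b⟩ := Cardinal.eq.1 hst
  let := IsAlgClosed.isAlgClosure_of_transcendence_basis _ hs
  let := IsAlgClosed.isAlgClosure_of_transcendence_basis _ ht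
  let φ := hs.1.aevalEquiv.symm.trans ((MvPolynomial.renameEquiv R b).trans ht.1.aevalEquiv)
  refine ⟨IsAlgClosure.equivOfEquiv K L φ.toRingEquiv, fun r => ?_⟩
  have hφ : φ.toRingEquiv (algebraMap R _ r) = algebraMap R _ r := φ.commutes r
  rw [IsScalarTower.algebraMap_apply R (Algebra.adjoin R (Set.range ((↑) : s → K))) K,
    IsAlgClosure.equivOfEquiv_algebraMap, hφ, ← IsScalarTower.algebraMap_apply R _ L]

variable {K : Type*} [Field K] [IsAlgClosed K]

lemma exists_ringEquiv_comp_eq {R : Type*} [CommRing R] [IsDomain R] [Countable R] (hK : ℵ₀ < #K)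
    {i j : R →+* K} (hi : Function.Injective i) (hj : Function.Injective j) :
    ∃ σ : K ≃+* K, ∀ r, σ (i r) = j r := by
  have faithful {φ : R →+* K} (hφ : Function.Injective φ) :
      @FaithfulSMul R K φ.toAlgebra.toSMul :=
    let := φ.toAlgebra
    (faithfulSMul_iff_algebraMap_injective R K).2 hφ
  exact @exists_ringEquiv_algebraMap_eq R K K _ _ _ _ _ i.toAlgebra j.toAlgebra _ _
    (faithful hi) (faithful hj) hK rfl

variable [CharZero K]

lemma exists_ringEquiv_apply_ne_of_isAlgebraic (hK : ℵ₀ < #K) {z : K} (hz : IsAlgebraic ℚ z)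
    (hzQ : z ∉ (⊥ : Subalgebra ℚ K)) : ∃ σ : K ≃+* K, σ z ≠ z := by
  have hirr := minpoly.irreducible hz.isIntegral
  have := Fact.mk hirr
  obtain ⟨y, hne, hconj⟩ :=
    (notMem_iff_exists_ne_and_isConjRoot hirr.separable (IsAlgClosed.splits _)).1 hzQ
  have : Countable ℚ[X] := mk_le_aleph0_iff.1 (by simp)
  have : Countable (AdjoinRoot (minpoly ℚ z)) := AdjoinRoot.mk_surjective.countable
  have hroot : (minpoly ℚ z).eval₂ (algebraMap ℚ K) z = 0 := minpoly.aeval ℚ z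
  have hroot' : (minpoly ℚ z).eval₂ (algebraMap ℚ K) y = 0 := hconj ▸ minpoly.aeval ℚ y
  obtain ⟨σ, hσ⟩ := exists_ringEquiv_comp_eq hK
    (AdjoinRoot.lift (algebraMap ℚ K) z hroot).injective
    (AdjoinRoot.lift (algebraMap ℚ K) y hroot').injective
  refine ⟨σ, fun h => hne ?_⟩
  simpa [h] using hσ (AdjoinRoot.root _)

lemma exists_ringEquiv_apply_ne_of_transcendental (hK : ℵ₀ < #K) {z : K}
    (hz : Transcendental ℚ z) : ∃ σ : K ≃+* K, σ z ≠ z := by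
  have hz1 : Transcendental ℚ (z + 1) := fun h =>
    hz (by simpa using h.sub (isAlgebraic_one (R := ℚ) (A := K)))
  have : Countable ℚ[X] := mk_le_aleph0_iff.1 (by simp)
  obtain ⟨σ, hσ⟩ := exists_ringEquiv_comp_eq hK
    (i := (aeval z : ℚ[X] →ₐ[ℚ] K).toRingHom) (j := (aeval (z + 1) : ℚ[X] →ₐ[ℚ] K).toRingHom)
    (transcendental_iff_injective.1 hz) (transcendental_iff_injective.1 hz1)
  exact ⟨σ, fun h => by simpa [h] using hσ X⟩

theorem exists_rat_eq_of_forall_ringEquiv_apply_eq (hK : ℵ₀ < #K) {z : K}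
    (hz : ∀ σ : K ≃+* K, σ z = z) : ∃ q : ℚ, z = q := by
  by_contra hzQ
  have hbot : z ∉ (⊥ : Subalgebra ℚ K) := by
    rintro ⟨q, hq⟩
    exact hzQ ⟨q, by simpa using hq.symm⟩
  obtain ⟨σ, hσ⟩ : ∃ σ : K ≃+* K, σ z ≠ z := by
    by_cases halg : IsAlgebraic ℚ z
    · exact exists_ringEquiv_apply_ne_of_isAlgebraic hK halg hbot
    · exact exists_ringEquiv_apply_ne_of_transcendental hK halg
  exact hσ (hz σ)

end FixedByAutomorphisms

/-! ### `q`-series -/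

section QSeries

open UpperHalfPlane hiding I
open Function Filter PowerSeries
open scoped Manifold MatrixGroups

/-- `HasQSeries F P`: the power series `P` converges to `F` in the variable `q = exp (2πiτ)` on the
whole upper half plane. Such an `F` is holomorphic, and bounded at the cusp `∞`. -/
def HasQSeries (F : ℍ → ℂ) (P : ℂ⟦X⟧) : Prop :=
  ∀ τ : ℍ, HasSum (fun m : ℕ => P.coeff m * Periodic.qParam 1 τ ^ m) (F τ)

lemma periodic_comp_ofComplex_of_vadd {α : Type*} {F : ℍ → α} {h : ℝ}
    (hF : ∀ τ, F (h +ᵥ τ) = F τ) : Periodic (F ∘ ofComplex) h := by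
  intro w
  by_cases hw : 0 < w.im
  · have hw' : 0 < (w + h).im := by simpa using hw
    simp only [comp_apply, ofComplex_apply_of_im_pos hw', ofComplex_apply_of_im_pos hw]
    convert! hF ⟨w, hw⟩ using 2
    ext
    simp [add_comm]
  · have hw' : (w + h).im ≤ 0 := by simpa using hw
    simp [ofComplex_apply_of_im_nonpos hw', ofComplex_apply_of_im_nonpos (not_lt.1 hw)]

lemma hasQSeries_qExpansion {F : ℍ → ℂ} (hd : MDiff F) (hb : IsBoundedAtImInfty F)
    (h : ∀ τ, F ((1 : ℝ) +ᵥ τ) = F τ) : HasQSeries F (qExpansion 1 F) := fun τ => by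
  simpa using UpperHalfPlane.hasSum_qExpansion one_pos (periodic_comp_ofComplex_of_vadd h) hd hb τ

lemma hasQSeries_modularForm {k : ℤ} (g : ModularForm 𝒮ℒ k) :
    HasQSeries g (qExpansion 1 g) := fun τ => by
  simpa using ModularForm.hasSum_qExpansion g one_pos (by simp) τ

namespace HasQSeries

variable {F G : ℍ → ℂ} {P Q : ℂ⟦X⟧}

lemma add (h : HasQSeries F P) (h' : HasQSeries G Q) : HasQSeries (F + G) (P + Q) := fun τ => by
  simpa [add_mul] using (h τ).add (h' τ)

lemma sub (h : HasQSeries F P) (h' : HasQSeries G Q) : HasQSeries (F - G) (P - Q) := fun τ => by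
  simpa [sub_mul] using (h τ).sub (h' τ)

lemma smul (a : ℂ) (h : HasQSeries F P) : HasQSeries (a • F) (a • P) := fun τ => by
  simpa [mul_assoc] using (h τ).mul_left a

lemma one : HasQSeries 1 1 := fun τ => by
  convert! hasSum_ite_eq (0 : ℕ) (1 : ℂ) using 2 with m
  split_ifs with h <;> simp [h, PowerSeries.coeff_one]

lemma zero : HasQSeries 0 0 := fun τ => by simp

lemma mul (h : HasQSeries F P) (h' : HasQSeries G Q) : HasQSeries (F * G) (P * Q) := fun τ => by
  have hP := (h τ).summable.norm
  have hQ := (h' τ).summable.norm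
  have hPQ := (summable_norm_sum_mul_antidiagonal_of_summable_norm hP hQ).of_norm.hasSum
  rw [← tsum_mul_tsum_eq_tsum_sum_antidiagonal_of_summable_norm hP hQ, (h τ).tsum_eq,
    (h' τ).tsum_eq] at hPQ
  convert! hPQ using 2 with m
  rw [PowerSeries.coeff_mul, Finset.sum_mul]
  refine Finset.sum_congr rfl fun x hx => ?_
  rw [← Finset.HasAntidiagonal.mem_antidiagonal.1 hx]
  ring

lemma pow (h : HasQSeries F P) (n : ℕ) : HasQSeries (F ^ n) (P ^ n) := by
  induction n with
  | zero => simpa using one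
  | succ n ih => simpa [pow_succ] using ih.mul h

lemma sum {ι : Type*} (s : Finset ι) {F : ι → ℍ → ℂ} {P : ι → ℂ⟦X⟧}
    (h : ∀ i ∈ s, HasQSeries (F i) (P i)) : HasQSeries (∑ i ∈ s, F i) (∑ i ∈ s, P i) := by
  classical
  induction s using Finset.induction_on with
  | empty => simpa using zero
  | insert a s ha ih =>
    rw [Finset.sum_insert ha, Finset.sum_insert ha]
    exact (h a (by simp)).add (ih fun i hi => h i (by simp [hi]))

lemma fun_unique (h : HasQSeries F P) (h' : HasQSeries G P) : F = G :=
  funext fun τ => (h τ).unique (h' τ)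

lemma isBoundedAtImInfty (h : HasQSeries F P) : IsBoundedAtImInfty F :=
  isBoundedAtImInfty_of_hasSum_qExpansion one_pos h

lemma one_vadd (h : HasQSeries F P) (τ : ℍ) : F ((1 : ℝ) +ᵥ τ) = F τ := by
  have hq : Periodic.qParam 1 ((1 : ℝ) +ᵥ τ : ℍ) = Periodic.qParam 1 τ := by
    simp [Periodic.qParam, mul_add, Complex.exp_add]
  have hsum := h ((1 : ℝ) +ᵥ τ)
  rw [hq] at hsum
  exact hsum.unique (h τ)

lemma one_le_radius (h : HasQSeries F P) :
    1 ≤ (FormalMultilinearSeries.ofScalars ℂ fun m => P.coeff m).radius := by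
  refine ENNReal.le_of_forall_nnreal_lt fun r hr => ?_
  rw [← ENNReal.coe_one, ENNReal.coe_lt_coe] at hr
  rcases eq_or_ne r 0 with rfl | hr0
  · simp
  have hq0 : ((r : ℝ) : ℂ) ≠ 0 := by simpa using hr0
  have him := Periodic.im_invQParam_pos_of_norm_lt_one (h := 1) one_pos (q := ((r : ℝ) : ℂ))
    (by simpa using hr) hq0
  have hsum := (h ⟨_, him⟩).summable.norm
  simp only [Periodic.qParam_right_inv one_ne_zero hq0] at hsum
  apply FormalMultilinearSeries.le_radius_of_summable
  convert! hsum using 2 with m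
  simp

lemma mdifferentiable (h : HasQSeries F P) : MDiff F := by
  rw [UpperHalfPlane.mdifferentiable_iff]
  set p := FormalMultilinearSeries.ofScalars ℂ fun m => P.coeff m with hp
  have hball {z : ℂ} (hz : 0 < z.im) : Periodic.qParam 1 z ∈ Metric.eball (0 : ℂ) p.radius := by
    rw [Metric.mem_eball, edist_zero_right, ← ofReal_norm]
    exact (ENNReal.ofReal_lt_one.2 (Periodic.norm_qParam_lt_one one_pos hz)).trans_le
      h.one_le_radius
  have hEq {z : ℂ} (hz : 0 < z.im) : (F ∘ ofComplex) z = p.sum (Periodic.qParam 1 z) := by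
    rw [comp_apply, ofComplex_apply_of_im_pos hz]
    refine (h ⟨z, hz⟩).unique ?_
    convert! p.hasSum (hball hz) using 2 with m
    simp [hp, mul_comm]
  have hdiff := (p.hasFPowerSeriesOnBall (one_pos.trans_le h.one_le_radius)).differentiableOn
  exact (hdiff.comp (Periodic.differentiable_qParam (h := 1)).differentiableOn
    fun _ => hball).congr fun _ => hEq

lemma unique (h : HasQSeries F P) (h' : HasQSeries F Q) : P = Q := by
  have han := analyticAt_cuspFunction_zero one_pos
    (periodic_comp_ofComplex_of_vadd h.one_vadd) h.mdifferentiable h.isBoundedAtImInfty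
  have hP := (hasFPowerSeriesOnBall_cuspFunction one_pos han (c := fun m => P.coeff m)
    h).hasFPowerSeriesAt
  have hQ := (hasFPowerSeriesOnBall_cuspFunction one_pos han (c := fun m => Q.coeff m)
    h').hasFPowerSeriesAt
  ext m
  simpa using congr_arg (FormalMultilinearSeries.coeff · m) (hP.eq_formalMultilinearSeries hQ)

end HasQSeries

/-- The `ℚ`-algebra of complex power series all of whose coefficients are rational. -/
def rationalSeries : Subalgebra ℚ ℂ⟦X⟧ := (PowerSeries.mapAlgHom (R := ℚ) (Algebra.ofId ℚ ℂ)).range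

lemma mem_rationalSeries_iff {P : ℂ⟦X⟧} :
    P ∈ rationalSeries ↔ ∀ m, ∃ q : ℚ, P.coeff m = q := by
  constructor
  · rintro ⟨Q, rfl⟩ m
    exact ⟨Q.coeff m, by simp [PowerSeries.mapAlgHom_apply]⟩
  · intro h
    choose q hq using h
    exact ⟨PowerSeries.mk q, by ext m; simp [PowerSeries.mapAlgHom_apply, hq]⟩

lemma map_eq_self_of_mem_rationalSeries (σ : ℂ →+* ℂ) {P : ℂ⟦X⟧} (hP : P ∈ rationalSeries) :
    P.map σ = P := by
  ext m
  obtain ⟨q, hq⟩ := mem_rationalSeries_iff.1 hP m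
  simp [hq]

end QSeries

/-! ### Level one -/

section LevelOne

open UpperHalfPlane hiding I
open PowerSeries
open scoped Manifold MatrixGroups ModularForm

lemma exists_modularForm_coe_eq {k : ℤ} {F : ℍ → ℂ} (hd : MDiff F)
    (hs : ∀ γ : SL(2, ℤ), F ∣[k] γ = F) (hb : IsBoundedAtImInfty F) :
    ∃ g : ModularForm 𝒮ℒ k, ⇑g = F :=
  ⟨{ toFun := F
     slash_action_eq' := by
      rintro _ ⟨γ, rfl⟩
      exact hs γ
     holo' := hd
     bdd_at_cusps' := fun hc => by
      rw [OnePoint.isBoundedAt_iff_forall_SL2Z hc]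
      intro γ _
      rwa [hs] }, rfl⟩

lemma modularForm_SL_slash {k : ℤ} (g : ModularForm 𝒮ℒ k) (γ : SL(2, ℤ)) :
    (⇑g) ∣[k] γ = ⇑g :=
  g.slash_action_eq' _ ⟨γ, rfl⟩

lemma qExpansion_E_mem_rationalSeries {k : ℕ} (hk : 3 ≤ k) (hk2 : Even k) :
    qExpansion 1 (ModularForm.E hk) ∈ rationalSeries := by
  refine mem_rationalSeries_iff.2 fun m => ?_
  rw [EisensteinSeries.E_qExpansion_coeff hk hk2]
  split_ifs
  · exact ⟨1, by simp⟩
  · exact ⟨-(2 * k / bernoulli k) * ArithmeticFunction.sigma (k - 1) m, by push_cast; rfl⟩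

lemma hasQSeries_discriminant :
    HasQSeries ModularForm.discriminant (qExpansion 1 ModularForm.discriminant) :=
  hasQSeries_modularForm (CuspForm.toModularFormₗ CuspForm.discriminant)

lemma qExpansion_discriminant_mem_rationalSeries :
    qExpansion 1 ModularForm.discriminant ∈ rationalSeries := by
  have hE₄₆ := (((hasQSeries_modularForm ModularForm.E₄).pow 3).sub
    ((hasQSeries_modularForm ModularForm.E₆).pow 2)).smul ((1728⁻¹ : ℚ) : ℂ)
  have hΔ : ((1728⁻¹ : ℚ) : ℂ) • ((⇑ModularForm.E₄) ^ 3 - (⇑ModularForm.E₆) ^ 2) =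
      ModularForm.discriminant := by
    ext τ
    rw [ModularForm.discriminant_eq_E₄_cube_sub_E₆_sq]
    simp [div_eq_inv_mul]
  rw [hΔ] at hE₄₆
  rw [hasQSeries_discriminant.unique hE₄₆, Rat.cast_smul_eq_qsmul]
  exact rationalSeries.smul_mem (sub_mem
    (pow_mem (qExpansion_E_mem_rationalSeries _ ⟨2, rfl⟩) 3)
    (pow_mem (qExpansion_E_mem_rationalSeries _ ⟨3, rfl⟩) 2)) _

/-- The complex span of the level one modular forms of weight `k` with rational Fourier
coefficients. -/
def rationalSpan (k : ℤ) : Submodule ℂ (ModularForm 𝒮ℒ k) :=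
  .span ℂ {g | qExpansion 1 g ∈ rationalSeries}

lemma subset_rationalSpan {k : ℤ} {g : ModularForm 𝒮ℒ k} (hg : qExpansion 1 g ∈ rationalSeries) :
    g ∈ rationalSpan k :=
  Submodule.subset_span hg

lemma ofMulDiscriminant_mem_rationalSpan {k : ℤ} {d : ModularForm 𝒮ℒ (k - 12)}
    (hd : d ∈ rationalSpan (k - 12)) :
    CuspForm.toModularFormₗ (CuspForm.ofMulDiscriminant d) ∈ rationalSpan k := by
  let L := CuspForm.toModularFormₗ ∘ₗ (CuspForm.discriminantEquiv (k := k)).symm.toLinearMap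
  suffices rationalSpan (k - 12) ≤ (rationalSpan k).comap L from this hd
  refine Submodule.span_le.2 fun g hg => subset_rationalSpan ?_
  have hL : ⇑(L g) = ModularForm.discriminant * ⇑g := rfl
  have hmul := hasQSeries_discriminant.mul (hasQSeries_modularForm g)
  rw [(hasQSeries_modularForm (L g)).unique (hL ▸ hmul)]
  exact mul_mem qExpansion_discriminant_mem_rationalSeries hg

lemma mem_rationalSpan_of_sub_twelve {k : ℕ} (hk : 3 ≤ k) (hk2 : Even k)
    (ih : rationalSpan ((k : ℤ) - 12) = ⊤) (g : ModularForm 𝒮ℒ k) : g ∈ rationalSpan k := by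
  set a := (qExpansion 1 g).coeff 0
  obtain ⟨c, hc⟩ := ModularForm.sub_smul_isCuspForm g (ModularForm.E hk)
    (EisensteinSeries.E_qExpansion_coeff_zero hk hk2)
  have hcspan : CuspForm.toModularFormₗ c ∈ rationalSpan k := by
    have hmem := ofMulDiscriminant_mem_rationalSpan (k := k) (d := CuspForm.discriminantEquiv c)
      (by rw [ih]; trivial)
    rwa [show CuspForm.ofMulDiscriminant (CuspForm.discriminantEquiv c) = c from
      CuspForm.discriminantEquiv.symm_apply_apply c] at hmem
  rw [← sub_add_cancel g (a • ModularForm.E hk), ← hc]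
  exact add_mem hcspan (Submodule.smul_mem _ _
    (subset_rationalSpan (qExpansion_E_mem_rationalSeries hk hk2)))

lemma mem_rationalSpan_zero (g : ModularForm 𝒮ℒ 0) : g ∈ rationalSpan 0 := by
  obtain ⟨a, ha⟩ := ModularFormClass.levelOne_weight_zero_const g
  have hg : g = a • (1 : ModularForm 𝒮ℒ 0) := by
    ext τ
    simp [ha]
  rw [hg]
  refine Submodule.smul_mem _ _ (subset_rationalSpan ?_)
  rw [ModularForm.qExpansion_one]
  exact one_mem _

theorem rationalSpan_eq_top (k : ℤ) : rationalSpan k = ⊤ := by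
  obtain ⟨n, hn⟩ : ∃ n : ℕ, k < 12 * n := ⟨k.toNat + 1, by omega⟩
  induction n generalizing k with
  | zero =>
    refine Submodule.eq_top_iff'.2 fun g => ?_
    have hg : g = 0 := DFunLike.coe_injective
      (ModularFormClass.levelOne_neg_weight_eq_zero (by simpa using hn) g)
    exact hg ▸ zero_mem _
  | succ n ih =>
    refine Submodule.eq_top_iff'.2 fun g => ?_
    rcases Int.even_or_odd k with hev | hodd
    swap
    · exact ModularForm.levelOne_odd_weight_eq_zero hodd g ▸ zero_mem _
    rcases lt_or_ge k 0 with hneg | hnonneg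
    · have hg : g = 0 := DFunLike.coe_injective
        (ModularFormClass.levelOne_neg_weight_eq_zero hneg g)
      exact hg ▸ zero_mem _
    lift k to ℕ using hnonneg
    obtain rfl | rfl | hk : k = 0 ∨ k = 2 ∨ 3 ≤ k := by grind
    · exact mem_rationalSpan_zero g
    · exact rank_zero_iff_forall_zero.1 ModularForm.levelOne_weight_two_rank_zero g ▸ zero_mem _
    · exact mem_rationalSpan_of_sub_twelve hk (by exact_mod_cast hev)
        (ih _ (by push_cast at hn; linarith)) g

theorem exists_modularForm_qExpansion_eq_map (σ : ℂ →+* ℂ) {k : ℤ} (g : ModularForm 𝒮ℒ k) :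
    ∃ g' : ModularForm 𝒮ℒ k, qExpansion 1 g' = (qExpansion 1 g).map σ := by
  have hg : g ∈ rationalSpan k := rationalSpan_eq_top k ▸ Submodule.mem_top
  induction hg using Submodule.span_induction with
  | mem g hg => exact ⟨g, (map_eq_self_of_mem_rationalSeries σ hg).symm⟩
  | zero => exact ⟨0, by simp [qExpansion_zero]⟩
  | add g h _ _ ihg ihh =>
    obtain ⟨g', hg'⟩ := ihg
    obtain ⟨h', hh'⟩ := ihh
    refine ⟨g' + h', ?_⟩
    rw [FunLike.coe_add, FunLike.coe_add, ModularForm.qExpansion_add one_pos (by simp),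
      ModularForm.qExpansion_add one_pos (by simp), hg', hh', map_add]
  | smul a g _ ih =>
    obtain ⟨g', hg'⟩ := ih
    refine ⟨σ a • g', ?_⟩
    rw [FunLike.coe_smul, FunLike.coe_smul, ModularForm.qExpansion_smul one_pos (by simp),
      ModularForm.qExpansion_smul one_pos (by simp), hg', PowerSeries.smul_eq_C_mul,
      PowerSeries.smul_eq_C_mul, map_mul, PowerSeries.map_C]

end LevelOne

/-! ### Weighted Eisenstein series -/

section WeightedEisenstein

open UpperHalfPlane hiding I
open Function EisensteinSeries Matrix
open scoped MatrixGroups ModularForm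

/-- The weight `k` Eisenstein series `∑ φ(c, d) (cτ + d)⁻ᵏ` over all integer vectors `(c, d)`. -/
def weightedEisenstein (φ : (Fin 2 → ℤ) → ℂ) (k : ℤ) (τ : ℍ) : ℂ := ∑' v, φ v * eisSummand k v τ

/-- Right multiplication by `γ`, as a permutation of the integer row vectors. -/
def vecMulEquiv (γ : SL(2, ℤ)) : (Fin 2 → ℤ) ≃ (Fin 2 → ℤ) where
  toFun v := v ᵥ* (γ : Matrix (Fin 2) (Fin 2) ℤ)
  invFun v := v ᵥ* ((γ⁻¹ : SL(2, ℤ)) : Matrix (Fin 2) (Fin 2) ℤ)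
  left_inv v := by
    simp only [vecMul_vecMul]
    exact (congrArg (v ᵥ* ·.1) (mul_inv_cancel γ)).trans (vecMul_one v)
  right_inv v := by
    simp only [vecMul_vecMul]
    exact (congrArg (v ᵥ* ·.1) (inv_mul_cancel γ)).trans (vecMul_one v)

lemma weightedEisenstein_slash (φ : (Fin 2 → ℤ) → ℂ) (k : ℤ) (γ : SL(2, ℤ)) :
    weightedEisenstein φ k ∣[k] γ = weightedEisenstein (φ ∘ (vecMulEquiv γ).symm) k := by
  ext τ
  rw [ModularForm.SL_slash_apply, weightedEisenstein, weightedEisenstein, ← tsum_mul_right,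
    ← (vecMulEquiv γ).tsum_eq fun v => (φ ∘ (vecMulEquiv γ).symm) v * eisSummand k v τ]
  refine tsum_congr fun v => ?_
  rw [Function.comp_apply, Equiv.symm_apply_apply, eisSummand_SL2_apply, mul_assoc, mul_right_comm,
    ← zpow_add₀ (denom_ne_zero _ _), add_neg_cancel, zpow_zero, one_mul]
  rfl

lemma tsum_norm_eisSummand_SL2 (k : ℤ) (γ : SL(2, ℤ)) (τ : ℍ) :
    ∑' v, ‖eisSummand k v (γ • τ)‖ = ‖denom γ τ‖ ^ k * ∑' v, ‖eisSummand k v τ‖ := by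
  rw [← (vecMulEquiv γ).tsum_eq fun v => ‖eisSummand k v τ‖, ← tsum_mul_left]
  refine tsum_congr fun v => ?_
  rw [eisSummand_SL2_apply, norm_mul, norm_zpow]
  rfl

lemma exists_forall_tsum_norm_eisSummand_le {k : ℤ} (hk : 3 ≤ k) :
    ∃ C : ℝ, ∀ τ : ℍ, 2 ≤ τ.im → ∑' v, ‖eisSummand k v τ‖ ≤ C := by
  have hk' : (2 : ℝ) < k := by norm_cast
  refine ⟨∑' x : Fin 2 → ℤ, r ⟨⟨(1 : ℕ), 2⟩, Nat.ofNat_pos⟩ ^ (-k) * ‖x‖ ^ (-k), fun τ hτ => ?_⟩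
  obtain ⟨n, hn⟩ := ModularGroup_T_zpow_mem_verticalStrip τ (N := 1) one_pos
  set A : SL(2, ℤ) := ModularGroup.T ^ (((1 : ℕ) : ℤ) * n) with hA
  have hdenom : denom A τ = 1 := by
    rw [ModularGroup.denom_apply, hA, ModularGroup.coe_T_zpow]
    simp
  have hinv := tsum_norm_eisSummand_SL2 k A τ
  rw [hdenom, norm_one, _root_.one_zpow, one_mul] at hinv
  rw [← hinv]
  refine (summable_norm_eisSummand hk _).tsum_le_tsum (fun x => ?_) ?_
  · simp_rw [eisSummand, norm_zpow]
    exact_mod_cast summand_bound_of_mem_verticalStrip (two_pos.trans hk').le x two_pos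
      (verticalStrip_anti_right _ hτ hn)
  · exact_mod_cast (summable_one_div_norm_rpow hk').mul_left <|
      r ⟨⟨(1 : ℕ), 2⟩, Nat.ofNat_pos⟩ ^ (-k)

section Bounds

variable {φ : (Fin 2 → ℤ) → ℂ} (hφ : ∀ v, ‖φ v‖ ≤ 1) {k : ℤ} (hk : 3 ≤ k)
include hφ

lemma norm_mul_eisSummand_le (v : Fin 2 → ℤ) (τ : ℍ) :
    ‖φ v * eisSummand k v τ‖ ≤ ‖eisSummand k v τ‖ := by
  rw [norm_mul]
  exact mul_le_of_le_one_left (norm_nonneg _) (hφ v)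

include hk

lemma summable_mul_eisSummand (τ : ℍ) : Summable fun v => φ v * eisSummand k v τ :=
  .of_norm_bounded (summable_norm_eisSummand hk τ) (norm_mul_eisSummand_le hφ · τ)

lemma isBoundedAtImInfty_weightedEisenstein : IsBoundedAtImInfty (weightedEisenstein φ k) := by
  obtain ⟨C, hC⟩ := exists_forall_tsum_norm_eisSummand_le hk
  rw [isBoundedAtImInfty_iff]
  exact ⟨C, 2, fun τ hτ => (tsum_of_norm_bounded (summable_norm_eisSummand hk τ).hasSum
    (norm_mul_eisSummand_le hφ · τ)).trans (hC τ hτ)⟩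

end Bounds

/-! ### The constant term of an Eisenstein series -/

lemma norm_eisSummand_add_one_le (k : ℤ) {v : Fin 2 → ℤ} (hv : v 0 ≠ 0) (τ : ℍ) :
    ‖eisSummand (k + 1) v τ‖ ≤ τ.im⁻¹ * ‖eisSummand k v τ‖ := by
  have him : τ.im ≤ ‖(v 0 : ℂ) * τ + v 1‖ := calc
    τ.im ≤ |(v 0 : ℝ)| * |τ.im| := by
      rw [abs_of_pos τ.im_pos]
      exact le_mul_of_one_le_left τ.im_pos.le (by exact_mod_cast Int.one_le_abs hv)
    _ = |((v 0 : ℂ) * τ + v 1).im| := by simp [abs_mul]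
    _ ≤ _ := Complex.abs_im_le_norm _
  have hne : (v 0 : ℂ) * τ + v 1 ≠ 0 := norm_pos_iff.1 (τ.im_pos.trans_le him)
  rw [eisSummand, eisSummand, neg_add, ← sub_eq_add_neg, zpow_sub_one₀ hne, norm_mul, mul_comm,
    norm_inv]
  exact mul_le_mul_of_nonneg_right (inv_anti₀ τ.im_pos him) (norm_nonneg _)

lemma norm_weightedEisenstein_le_of_eq_zero {φ : (Fin 2 → ℤ) → ℂ} (hφ : ∀ v, ‖φ v‖ ≤ 1)
    (h0 : ∀ v, v 0 = 0 → φ v = 0) {k : ℤ} (hk : 3 ≤ k) (τ : ℍ) :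
    ‖weightedEisenstein φ (k + 1) τ‖ ≤ τ.im⁻¹ * ∑' v, ‖eisSummand k v τ‖ := by
  refine tsum_of_norm_bounded ((summable_norm_eisSummand hk τ).hasSum.mul_left _) fun v => ?_
  by_cases hv : v 0 = 0
  · have := τ.im_pos
    rw [h0 v hv, zero_mul, norm_zero]
    positivity
  · exact (norm_mul_eisSummand_le hφ v τ).trans (norm_eisSummand_add_one_le k hv τ)

open ComplexOrder in
lemma one_le_norm_weightedEisenstein {φ : (Fin 2 → ℤ) → ℂ} (hφ : ∀ v, ‖φ v‖ ≤ 1)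
    (hpos : ∀ v, 0 ≤ φ v) (h0 : ∀ v, v 0 ≠ 0 → φ v = 0) (h1 : φ ![0, 1] = 1)
    {k : ℤ} (hk : 3 ≤ k) (hev : Even k) (τ : ℍ) :
    1 ≤ ‖weightedEisenstein φ k τ‖ := by
  have hnonneg (v) : 0 ≤ φ v * eisSummand k v τ := by
    by_cases hv : v 0 = 0
    · refine mul_nonneg (hpos v) ?_
      have hreal : eisSummand k v τ = (((v 1 : ℝ) ^ (-k) : ℝ) : ℂ) := by simp [eisSummand, hv]
      rw [hreal, Complex.zero_le_real]
      exact hev.neg.zpow_nonneg _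
    · simp [h0 v hv]
  have hle := (summable_mul_eisSummand hφ hk τ).le_tsum ![0, 1] fun v _ => hnonneg v
  simpa [h1, eisSummand, weightedEisenstein] using hle.1.trans (Complex.re_le_norm _)

open ComplexOrder in
lemma exists_forall_half_le_norm_weightedEisenstein {φ : (Fin 2 → ℤ) → ℂ} (hφ : ∀ v, ‖φ v‖ ≤ 1)
    (hpos : ∀ v, 0 ≤ φ v) (h1 : φ ![0, 1] = 1) {k : ℤ} (hk : 3 ≤ k) (hodd : Odd k) :
    ∃ A : ℝ, ∀ τ : ℍ, A ≤ τ.im → 1 / 2 ≤ ‖weightedEisenstein φ (k + 1) τ‖ := by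
  obtain ⟨C, hC⟩ := exists_forall_tsum_norm_eisSummand_le hk
  refine ⟨max 2 (2 * C), fun τ hτ => ?_⟩
  let S : Set (Fin 2 → ℤ) := {v | v 0 = 0}
  have hnorm (T : Set (Fin 2 → ℤ)) (v) : ‖T.indicator φ v‖ ≤ 1 :=
    (norm_indicator_le_norm_self _ _).trans (hφ v)
  have hsplit : weightedEisenstein φ (k + 1) τ = weightedEisenstein (S.indicator φ) (k + 1) τ +
      weightedEisenstein (Sᶜ.indicator φ) (k + 1) τ := by
    unfold weightedEisenstein
    rw [← (summable_mul_eisSummand (hnorm S) (by linarith) τ).tsum_add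
      (summable_mul_eisSummand (hnorm Sᶜ) (by linarith) τ)]
    refine tsum_congr fun v => ?_
    rw [← add_mul, Set.indicator_self_add_compl_apply]
  have hmain : 1 ≤ ‖weightedEisenstein (S.indicator φ) (k + 1) τ‖ :=
    one_le_norm_weightedEisenstein (hnorm S) (fun v => Set.indicator_nonneg (fun v _ => hpos v) v)
      (fun v hv => Set.indicator_of_notMem (s := S) hv φ)
      ((Set.indicator_of_mem (s := S) rfl φ).trans h1) (by linarith) hodd.add_one τ
  have hrest : ‖weightedEisenstein (Sᶜ.indicator φ) (k + 1) τ‖ ≤ 1 / 2 := by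
    refine (norm_weightedEisenstein_le_of_eq_zero (hnorm Sᶜ)
      (fun v hv => Set.indicator_of_notMem (not_not.2 hv) φ) hk τ).trans ?_
    rw [inv_mul_le_iff₀ τ.im_pos]
    linarith [hC τ ((le_max_left _ _).trans hτ), (le_max_right _ _).trans hτ]
  rw [hsplit]
  linarith [norm_sub_le_norm_add (weightedEisenstein (S.indicator φ) (k + 1) τ)
    (weightedEisenstein (Sᶜ.indicator φ) (k + 1) τ)]

/-! ### Fourier expansion when the weight depends on the first entry only -/

/-- The power series `∑ₘ (∑_{cd = m} ψ(c) dᵏ⁻¹) qᵐ`. -/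
def divisorSeries (ψ : ℤ → ℂ) (k : ℕ) : PowerSeries ℂ :=
  .mk fun m => ∑ x ∈ m.divisorsAntidiagonal, ψ x.1 * (x.2 : ℂ) ^ (k - 1)

lemma divisorSeries_mem_rationalSeries {ψ : ℤ → ℂ} (hψ : ∀ c, ∃ q : ℚ, ψ c = q) (k : ℕ) :
    divisorSeries ψ k ∈ rationalSeries := by
  choose ψ' hψ' using hψ
  refine mem_rationalSeries_iff.2 fun m =>
    ⟨∑ x ∈ m.divisorsAntidiagonal, ψ' x.1 * (x.2 : ℚ) ^ (k - 1), ?_⟩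
  simp [divisorSeries, hψ']

lemma hasSum_sum_divisorsAntidiagonal (ψ : ℕ → ℂ) (hψ : ∀ c, ‖ψ c‖ ≤ 1) (k : ℕ) {q : ℂ}
    (hq : ‖q‖ < 1) :
    HasSum (fun m : ℕ => (∑ x ∈ m.divisorsAntidiagonal, ψ x.1 * (x.2 : ℂ) ^ k) * q ^ m)
      (∑' (c : ℕ+) (d : ℕ+), ψ c * ((d : ℂ) ^ k * q ^ (c * d : ℕ))) := by
  have hs : Summable fun c : ℕ+ × ℕ+ => ψ c.1 * ((c.2 : ℂ) ^ k * q ^ (c.1 * c.2 : ℕ)) := by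
    refine .of_norm_bounded (summable_prod_mul_pow k hq).norm fun c => ?_
    rw [norm_mul]
    exact mul_le_of_le_one_left (norm_nonneg _) (hψ _)
  have hsum := hs.hasSum
  rw [hs.tsum_prod, ← sigmaAntidiagonalEquivProd.hasSum_iff] at hsum
  have hfiber := hsum.sigma (g := fun m : ℕ+ =>
    (∑ x ∈ (m : ℕ).divisorsAntidiagonal, ψ x.1 * (x.2 : ℂ) ^ k) * q ^ (m : ℕ)) fun m => by
      rw [Finset.sum_mul, ← Finset.sum_coe_sort]
      convert! hasSum_fintype _ using 1
      refine Finset.sum_congr rfl fun x _ => ?_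
      have := (Nat.mem_divisorsAntidiagonal.1 x.2).1
      simp [sigmaAntidiagonalEquivProd, divisorsAntidiagonalFactors, this, mul_assoc]
  refine (PNat.coe_injective.hasSum_iff fun m hm => ?_).1 hfiber
  obtain rfl : m = 0 := by
    by_contra h
    exact hm ⟨⟨m, Nat.pos_of_ne_zero h⟩, rfl⟩
  simp

section FirstEntry

variable {ψ : ℤ → ℂ} {k : ℕ}

lemma tsum_eisSummand_row_neg (hψ : ∀ c, ψ (-c) = (-1) ^ k * ψ c) (c : ℤ) (τ : ℍ) :
    ψ (-c) * ∑' d : ℤ, eisSummand k ![-c, d] τ = ψ c * ∑' d : ℤ, eisSummand k ![c, d] τ := by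
  have hsq : ((-1 : ℂ) ^ k) * ((-1 : ℂ) ^ k)⁻¹ = 1 := mul_inv_cancel₀ (by simp)
  rw [← tsum_comp_neg, ← tsum_mul_left, ← tsum_mul_left]
  refine tsum_congr fun d => ?_
  simp only [hψ, eisSummand, cons_val_zero, cons_val_one, Int.cast_neg]
  rw [show -(c : ℂ) * τ + -(d : ℂ) = (-1) * (c * τ + d) by ring, mul_zpow, _root_.zpow_neg,
    _root_.zpow_neg, zpow_natCast]
  linear_combination (ψ c * ((c * τ + d : ℂ) ^ (k : ℤ))⁻¹) * hsq

lemma weightedEisenstein_firstEntry (hb : ∀ c, ‖ψ c‖ ≤ 1) (h0 : ψ 0 = 0) (hk : 3 ≤ k)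
    (hψ : ∀ c, ψ (-c) = (-1) ^ k * ψ c) (τ : ℍ) :
    weightedEisenstein (fun v => ψ (v 0)) k τ =
      2 * ∑' c : ℕ+, ψ c * ∑' d : ℤ, eisSummand k ![((c : ℕ) : ℤ), d] τ := by
  have hs : Summable fun x : ℤ × ℤ => ψ x.1 * eisSummand k ![x.1, x.2] τ := by
    refine .of_norm_bounded (summable_prod_eisSummand hk τ).norm fun x => ?_
    rw [norm_mul]
    exact mul_le_of_le_one_left (norm_nonneg _) (hb _)
  have hrow : Summable fun c : ℤ => ψ c * ∑' d : ℤ, eisSummand k ![c, d] τ := by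
    simpa only [tsum_mul_left] using hs.prod
  rw [weightedEisenstein, ← (finTwoArrowEquiv ℤ).symm.tsum_eq]
  simp only [finTwoArrowEquiv_symm_apply, cons_val_zero]
  rw [hs.tsum_prod]
  simp only [tsum_mul_left]
  rw [tsum_int_eq_zero_add_two_mul_tsum_pnat (fun c => tsum_eisSummand_row_neg hψ c τ) hrow]
  simp [h0]

lemma tsum_eisSummand_row (hk : 2 ≤ k) (c : ℕ+) (τ : ℍ) :
    ∑' d : ℤ, eisSummand k ![((c : ℕ) : ℤ), d] τ = ((-2 * Real.pi * Complex.I) ^ k /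
      (k - 1).factorial) * ∑' d : ℕ+, (d : ℂ) ^ (k - 1) * Periodic.qParam 1 τ ^ (c * d : ℕ) := by
  have hLip := qExpansion_identity_pnat (k := k - 1) (by grind) ⟨c * τ, by simpa using τ.2⟩
  rw [show k - 1 + 1 = k by grind] at hLip
  convert! hLip using 2
  · ext d
    simp [eisSummand]
  · refine tsum_congr fun d => ?_
    simp only [Periodic.qParam, ← Complex.exp_nat_mul]
    push_cast
    ring_nf

/-- The factor `2(-2πi)ᵏ/(k-1)!` by which an Eisenstein series of weight `k` differs from a
`q`-series with rational coefficients. -/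
def eisensteinConst (k : ℕ) : ℂ := 2 * ((-2 * Real.pi * Complex.I) ^ k / (k - 1).factorial)

lemma eisensteinConst_ne_zero (k : ℕ) : eisensteinConst k ≠ 0 := by
  simp [eisensteinConst, Real.pi_ne_zero, Nat.factorial_ne_zero]

/-- The Eisenstein series of weight `k` attached to a function `ψ` of the first entry, normalised to
have the Fourier expansion `divisorSeries ψ k`. -/
def divisorEisenstein (ψ : ℤ → ℂ) (k : ℕ) : ℍ → ℂ :=
  (eisensteinConst k)⁻¹ • weightedEisenstein (fun v => ψ (v 0)) k

theorem hasQSeries_divisorEisenstein (hb : ∀ c, ‖ψ c‖ ≤ 1) (h0 : ψ 0 = 0) (hk : 3 ≤ k)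
    (hψ : ∀ c, ψ (-c) = (-1) ^ k * ψ c) :
    HasQSeries (divisorEisenstein ψ k) (divisorSeries ψ k) := fun τ => by
  have hsum := hasSum_sum_divisorsAntidiagonal (fun c => ψ c) (fun c => hb c) (k - 1)
    (Periodic.norm_qParam_lt_one one_pos τ.im_pos)
  simp only [divisorSeries, PowerSeries.coeff_mk]
  convert! hsum using 1
  rw [divisorEisenstein, Pi.smul_apply, smul_eq_mul,
    inv_mul_eq_iff_eq_mul₀ (eisensteinConst_ne_zero k),
    weightedEisenstein_firstEntry hb h0 hk hψ, eisensteinConst, mul_assoc]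
  congr 1
  rw [← tsum_mul_left]
  refine tsum_congr fun c => ?_
  rw [tsum_eisSummand_row (by grind), tsum_mul_left, mul_left_comm]

end FirstEntry

end WeightedEisenstein

/-! ### Quadratic characters and forms for `Γ₀(D)` -/

namespace IsQuadDirChar

variable {D : ℕ} {χ : ℤ → ℂ} (hχ : IsQuadDirChar D χ)
include hχ

lemma mul_self_eq_one {a : ℤ} (ha : IsCoprime a (D : ℤ)) : χ a * χ a = 1 := by
  have hne : χ a ≠ 0 := fun h => (hχ.eq_zero_iff a).1 h ha
  rcases hχ.sq_vals a with h | h | h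
  · exact absurd h hne
  · simp [h]
  · simp [h]

lemma map_one : χ 1 = 1 := by
  have hsq := hχ.mul_self_eq_one (a := 1) isCoprime_one_left
  rwa [← hχ.mul, one_mul] at hsq

lemma map_zero (hD : D ≠ 1) : χ 0 = 0 := by
  rw [hχ.eq_zero_iff, isCoprime_zero_left, Int.ofNat_isUnit, Nat.isUnit_iff]
  exact hD

lemma map_eq_of_dvd_sub {a b : ℤ} (h : (D : ℤ) ∣ a - b) : χ a = χ b := by
  have hper : Function.Periodic χ D := hχ.periodic
  obtain ⟨e, he⟩ := h
  rw [sub_eq_iff_eq_add'.1 he, mul_comm]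
  exact hper.int_mul e b

lemma norm_le_one (a : ℤ) : ‖χ a‖ ≤ 1 := by
  rcases hχ.sq_vals a with h | h | h <;> simp [h]

lemma exists_rat_eq (a : ℤ) : ∃ q : ℚ, χ a = q := by
  rcases hχ.sq_vals a with h | h | h
  · exact ⟨0, by simp [h]⟩
  · exact ⟨1, by simp [h]⟩
  · exact ⟨-1, by simp [h]⟩

lemma exists_forall_map_neg : ∃ k : ℕ, 3 ≤ k ∧ ∀ a, χ (-a) = (-1) ^ k * χ a := by
  have hneg (a) : χ (-a) = χ (-1) * χ a := by rw [← hχ.mul, neg_one_mul]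
  have hsq : χ (-1) * χ (-1) = 1 := by rw [← hχ.mul, neg_mul_neg, one_mul, hχ.map_one]
  rcases mul_self_eq_one_iff.1 hsq with h | h
  · exact ⟨4, by norm_num, fun a => by rw [hneg, h, Even.neg_one_pow (by decide)]⟩
  · exact ⟨3, le_rfl, fun a => by rw [hneg, h, Odd.neg_one_pow (by decide)]⟩

end IsQuadDirChar

section Gamma0Forms

open UpperHalfPlane hiding I
open Matrix
open scoped Manifold MatrixGroups ModularForm

/-- `F` is a holomorphic modular form of weight `k`, level `Γ₀(D)` and character `χ`. -/
structure IsGamma0Form (D : ℕ) (χ : ℤ → ℂ) (k : ℤ) (F : ℍ → ℂ) : Prop where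
  mdifferentiable : MDiff F
  slash_eq : ∀ γ : SL(2, ℤ), (D : ℤ) ∣ γ 1 0 → F ∣[k] γ = χ (γ 1 1) • F
  isBoundedAtImInfty_slash : ∀ γ : SL(2, ℤ), IsBoundedAtImInfty (F ∣[k] γ)

lemma isCoprime_of_dvd_lowerLeft {D : ℤ} {γ : SL(2, ℤ)} (h : D ∣ γ 1 0) : IsCoprime (γ 1 1) D := by
  obtain ⟨e, he⟩ := h
  have hdet := γ.det_coe
  rw [det_fin_two, he] at hdet
  exact ⟨γ 0 0, -(γ 0 1 * e), by linear_combination hdet⟩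

lemma vecMulEquiv_symm_apply_zero (γ : SL(2, ℤ)) (v : Fin 2 → ℤ) :
    (vecMulEquiv γ).symm v 0 = v 0 * γ 1 1 - v 1 * γ 1 0 := by
  change (v ᵥ* (γ⁻¹).1) 0 = _
  rw [SpecialLinearGroup.SL2_inv_expl]
  simp [vecMul, dotProduct, Fin.sum_univ_two]
  ring

lemma divisorEisenstein_slash (ψ : ℤ → ℂ) (k : ℕ) (γ : SL(2, ℤ)) :
    divisorEisenstein ψ k ∣[(k : ℤ)] γ = (eisensteinConst k)⁻¹ •
      weightedEisenstein (fun v => ψ (v 0 * γ 1 1 - v 1 * γ 1 0)) k := by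
  rw [divisorEisenstein, ModularForm.SL_smul_slash, weightedEisenstein_slash]
  simp only [Function.comp_def, vecMulEquiv_symm_apply_zero]

lemma isGamma0Form_divisorEisenstein {D : ℕ} {ψ χ : ℤ → ℂ} (hb : ∀ c, ‖ψ c‖ ≤ 1) (h0 : ψ 0 = 0)
    {k : ℕ} (hk : 3 ≤ k) (hψ : ∀ c, ψ (-c) = (-1) ^ k * ψ c)
    (hχ : ∀ γ : SL(2, ℤ), (D : ℤ) ∣ γ 1 0 → ∀ c d, ψ (c * γ 1 1 - d * γ 1 0) = χ (γ 1 1) * ψ c) :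
    IsGamma0Form D χ k (divisorEisenstein ψ k) where
  mdifferentiable := (hasQSeries_divisorEisenstein hb h0 hk hψ).mdifferentiable
  slash_eq γ hγ := by
    rw [divisorEisenstein_slash]
    simp only [hχ γ hγ]
    ext τ
    simp only [divisorEisenstein, weightedEisenstein, Pi.smul_apply, smul_eq_mul, mul_assoc,
      tsum_mul_left]
    ring
  isBoundedAtImInfty_slash γ := by
    rw [divisorEisenstein_slash]
    exact (isBoundedAtImInfty_weightedEisenstein (fun v => hb _)
      (by exact_mod_cast hk)).const_smul_left _

lemma isGamma0Form_of_modularForm {D : ℕ} {χ : ℤ → ℂ} (hχ : ∀ a, IsCoprime a (D : ℤ) → χ a = 1)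
    {k : ℤ} (g : ModularForm 𝒮ℒ k) : IsGamma0Form D χ k g where
  mdifferentiable := g.holo'
  slash_eq γ hγ := by
    rw [modularForm_SL_slash, hχ _ (isCoprime_of_dvd_lowerLeft hγ), one_smul]
  isBoundedAtImInfty_slash γ := by
    rw [modularForm_SL_slash]
    exact (hasQSeries_modularForm g).isBoundedAtImInfty

theorem exists_isGamma0Form_rational {D : ℕ} {χ : ℤ → ℂ} (hχ : IsQuadDirChar D χ) :
    ∃ (k : ℕ) (E : ℍ → ℂ) (P : PowerSeries ℂ),
      IsGamma0Form D χ k E ∧ HasQSeries E P ∧ P ∈ rationalSeries ∧ P ≠ 0 := by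
  rcases eq_or_ne D 1 with rfl | hD
  · have hχ1 (a : ℤ) : χ a = 1 := by rw [hχ.map_eq_of_dvd_sub (b := 1) (by simp), hχ.map_one]
    refine ⟨4, _, _, isGamma0Form_of_modularForm (fun a _ => hχ1 a) ModularForm.E₄,
      hasQSeries_modularForm _, qExpansion_E_mem_rationalSeries _ ⟨2, rfl⟩, fun h => ?_⟩
    have hcoeff := EisensteinSeries.E_qExpansion_coeff_zero (k := 4) (by norm_num) ⟨2, rfl⟩
    simp [h] at hcoeff
  · obtain ⟨k, hk, hneg⟩ := hχ.exists_forall_map_neg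
    have h0 := hχ.map_zero hD
    refine ⟨k, _, _, isGamma0Form_divisorEisenstein hχ.norm_le_one h0 hk hneg ?_,
      hasQSeries_divisorEisenstein hχ.norm_le_one h0 hk hneg,
      divisorSeries_mem_rationalSeries hχ.exists_rat_eq k, fun h => ?_⟩
    · rintro γ ⟨e, he⟩ c d
      rw [mul_comm c, ← hχ.mul]
      exact hχ.map_eq_of_dvd_sub ⟨-d * e, by rw [he]; ring⟩
    · have hcoeff : (divisorSeries χ k).coeff 1 = 1 := by simp [divisorSeries, hχ.map_one]
      simp [h] at hcoeff

/-! ### A form vanishing at no cusp but `∞` -/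

/-- The indicator function of the integers not divisible by `D`. -/
def notDvdIndicator (D : ℕ) (c : ℤ) : ℂ := if (D : ℤ) ∣ c then 0 else 1

section NotDvdIndicator

variable {D : ℕ} (c : ℤ)

lemma norm_notDvdIndicator_le_one : ‖notDvdIndicator D c‖ ≤ 1 := by
  unfold notDvdIndicator
  split_ifs <;> simp

lemma notDvdIndicator_zero : notDvdIndicator D 0 = 0 := by simp [notDvdIndicator]

lemma notDvdIndicator_neg : notDvdIndicator D (-c) = (-1) ^ 4 * notDvdIndicator D c := by
  rw [Even.neg_one_pow (by decide), one_mul]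
  simp [notDvdIndicator]

lemma exists_rat_eq_notDvdIndicator : ∃ q : ℚ, notDvdIndicator D c = q :=
  ⟨if (D : ℤ) ∣ c then 0 else 1, by unfold notDvdIndicator; split_ifs <;> simp⟩

end NotDvdIndicator

/-- The Eisenstein series of weight `4` summed over the `(c, d)` with `D ∤ c`, suitably normalised.
It separates the cusp `∞` from the others: it vanishes at `∞` and at no other cusp. -/
def cuspSeparator (D : ℕ) : ℍ → ℂ := divisorEisenstein (notDvdIndicator D) 4

lemma hasQSeries_cuspSeparator (D : ℕ) :
    HasQSeries (cuspSeparator D) (divisorSeries (notDvdIndicator D) 4) :=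
  hasQSeries_divisorEisenstein norm_notDvdIndicator_le_one notDvdIndicator_zero (by norm_num)
    notDvdIndicator_neg

lemma isGamma0Form_cuspSeparator (D : ℕ) : IsGamma0Form D 1 4 (cuspSeparator D) := by
  refine isGamma0Form_divisorEisenstein norm_notDvdIndicator_le_one notDvdIndicator_zero
    (by norm_num) notDvdIndicator_neg fun γ hγ c d => ?_
  have hdvd : (D : ℤ) ∣ c * γ 1 1 - d * γ 1 0 ↔ (D : ℤ) ∣ c := by
    rw [dvd_sub_left (hγ.mul_left d)]
    exact ⟨(isCoprime_of_dvd_lowerLeft hγ).symm.dvd_of_dvd_mul_right, fun h => h.mul_right _⟩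
  simp only [notDvdIndicator, hdvd, Pi.one_apply, one_mul]

open ComplexOrder in
/-- The constant term of the conjugate by `γ` is a sum of the `d⁻⁴` with `D ∤ d γ₁₀`, which is empty
exactly if `D ∣ γ₁₀`. -/
theorem exists_forall_le_norm_cuspSeparator_slash {D : ℕ} {γ : SL(2, ℤ)} (hγ : ¬ (D : ℤ) ∣ γ 1 0) :
    ∃ ε > 0, ∃ A, ∀ τ : ℍ, A ≤ τ.im → ε ≤ ‖(cuspSeparator D ∣[(4 : ℤ)] γ) τ‖ := by
  obtain ⟨A, hA⟩ := exists_forall_half_le_norm_weightedEisenstein (k := 3)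
    (φ := fun v => notDvdIndicator D (v 0 * γ 1 1 - v 1 * γ 1 0))
    (fun v => norm_notDvdIndicator_le_one _)
    (fun v => by simp only [notDvdIndicator]; split_ifs <;> simp)
    (by simp [notDvdIndicator, hγ]) le_rfl (by decide)
  have hc : 0 < ‖(eisensteinConst 4)⁻¹‖ := norm_pos_iff.2 (inv_ne_zero (eisensteinConst_ne_zero 4))
  refine ⟨‖(eisensteinConst 4)⁻¹‖ * (1 / 2), by positivity, A, fun τ hτ => ?_⟩
  have hslash := congrFun (divisorEisenstein_slash (notDvdIndicator D) 4 γ) τ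
  rw [Nat.cast_ofNat] at hslash
  rw [cuspSeparator, hslash, Pi.smul_apply, norm_smul]
  exact mul_le_mul_of_nonneg_left (hA τ hτ) hc.le

end Gamma0Forms

/-! ### Polynomials whose coefficients are modular forms of level one -/

section ModularPolynomials

open UpperHalfPlane hiding I
open Polynomial
open scoped Manifold MatrixGroups ModularForm PowerSeries

lemma apply_smul_eq_denom_zpow_mul (k : ℤ) (F : ℍ → ℂ) (γ : SL(2, ℤ)) (τ : ℍ) :
    F (γ • τ) = denom γ τ ^ k * (F ∣[k] γ) τ := by
  rw [ModularForm.SL_slash_apply, mul_comm, mul_assoc, ← zpow_add₀ (denom_ne_zero γ τ),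
    neg_add_cancel, zpow_zero, mul_one]

/-- The ring of holomorphic functions on `ℍ` bounded at `i∞`. -/
def boundedHolomorphic : Subring (ℍ → ℂ) where
  carrier := {F | MDiff F ∧ IsBoundedAtImInfty F}
  mul_mem' ha hb := ⟨ha.1.mul hb.1, ha.2.mul hb.2⟩
  one_mem' := ⟨mdifferentiable_const, Filter.const_boundedAtFilter _ _⟩
  add_mem' ha hb := ⟨ha.1.add hb.1, ha.2.add hb.2⟩
  zero_mem' := ⟨mdifferentiable_const, Filter.const_boundedAtFilter _ _⟩
  neg_mem' ha := ⟨ha.1.neg, ha.2.neg⟩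

lemma modularForm_mem_boundedHolomorphic {k : ℤ} (g : ModularForm 𝒮ℒ k) :
    ⇑g ∈ boundedHolomorphic :=
  ⟨g.holo', (hasQSeries_modularForm g).isBoundedAtImInfty⟩

/-- The polynomial `p` is isobaric of weight `w` if its variable is given the weight `l`: its `r`-th
coefficient is a modular form of level one and weight `w - l * r`. -/
def IsModularPolynomial (l w : ℤ) (p : (ℍ → ℂ)[X]) : Prop :=
  ∀ r : ℕ, ∃ g : ModularForm 𝒮ℒ (w - l * r), ⇑g = p.coeff r

/-- The polynomial with complex coefficients obtained by evaluating the coefficients at `τ`. -/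
abbrev specialize (p : (ℍ → ℂ)[X]) (τ : ℍ) : ℂ[X] := p.map (Pi.evalRingHom _ τ)

lemma eval_apply_eq_eval_specialize (p : (ℍ → ℂ)[X]) (F : ℍ → ℂ) (τ : ℍ) :
    (p.eval F) τ = (specialize p τ).eval (F τ) := by
  rw [eval_map]
  exact (eval₂_at_apply (Pi.evalRingHom _ τ) F).symm

lemma isModularPolynomial_of_comp {l w : ℤ} {p : (ℍ → ℂ)[X]}
    (hmem : ∀ r, p.coeff r ∈ boundedHolomorphic)
    (hcomp : ∀ (γ : SL(2, ℤ)) (τ : ℍ), (specialize p (γ • τ)).comp (C (denom γ τ ^ l) * X) =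
      C (denom γ τ ^ w) * specialize p τ) :
    IsModularPolynomial l w p := fun r => by
  refine exists_modularForm_coe_eq (hmem r).1 (fun γ => ?_) (hmem r).2
  ext τ
  have hJ := denom_ne_zero γ τ
  have hr := congrArg (fun P => P.coeff r) (hcomp γ τ)
  simp only [comp_C_mul_X_coeff, coeff_C_mul, coeff_map, Pi.evalRingHom_apply] at hr
  refine mul_left_cancel₀ (zpow_ne_zero w hJ) ?_
  rw [← hr, apply_smul_eq_denom_zpow_mul (w - l * r) (p.coeff r), zpow_sub₀ hJ, zpow_mul,
    zpow_natCast]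
  field_simp

namespace IsModularPolynomial

variable {l w : ℤ} {p : (ℍ → ℂ)[X]} (hp : IsModularPolynomial l w p)
include hp

lemma coeff_mem_boundedHolomorphic (r : ℕ) : p.coeff r ∈ boundedHolomorphic := by
  obtain ⟨g, hg⟩ := hp r
  exact hg ▸ modularForm_mem_boundedHolomorphic g

lemma eval_slash (F : ℍ → ℂ) (γ : SL(2, ℤ)) : (p.eval F) ∣[w] γ = p.eval (F ∣[l] γ) := by
  ext τ
  have hJ := denom_ne_zero γ τ
  refine mul_left_cancel₀ (zpow_ne_zero w hJ) ?_
  rw [← apply_smul_eq_denom_zpow_mul, eval_eq_sum_range, eval_eq_sum_range, Finset.sum_apply,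
    Finset.sum_apply, Finset.mul_sum]
  refine Finset.sum_congr rfl fun r _ => ?_
  obtain ⟨g, hg⟩ := hp r
  simp only [Pi.mul_apply, Pi.pow_apply]
  rw [← hg, apply_smul_eq_denom_zpow_mul l F, apply_smul_eq_denom_zpow_mul (w - l * r) g,
    modularForm_SL_slash, zpow_sub₀ hJ, zpow_mul, zpow_natCast, mul_pow]
  field_simp

end IsModularPolynomial

/-! ### Galois conjugation of modular polynomials -/

/-- The coefficients of `p` are the sums of the `q`-series which are the coefficients of `P`. -/
def HasQPolynomial (p : (ℍ → ℂ)[X]) (P : ℂ⟦X⟧[X]) : Prop :=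
  ∀ r, HasQSeries (p.coeff r) (P.coeff r)

namespace HasQPolynomial

variable {p : (ℍ → ℂ)[X]} {P : ℂ⟦X⟧[X]} (h : HasQPolynomial p P)
include h

lemma coeff_eq_zero_iff (r : ℕ) : p.coeff r = 0 ↔ P.coeff r = 0 := by
  have hr := h r
  constructor <;> intro h0 <;> rw [h0] at hr
  · exact hr.unique HasQSeries.zero
  · exact hr.fun_unique HasQSeries.zero

lemma natDegree_eq : p.natDegree = P.natDegree :=
  le_antisymm
    (natDegree_le_iff_coeff_eq_zero.2 fun r hr =>
      (h.coeff_eq_zero_iff r).2 (coeff_eq_zero_of_natDegree_lt hr))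
    (natDegree_le_iff_coeff_eq_zero.2 fun r hr =>
      (h.coeff_eq_zero_iff r).1 (coeff_eq_zero_of_natDegree_lt hr))

lemma monic_iff : p.Monic ↔ P.Monic := by
  have hlead := h p.natDegree
  rw [Monic, Monic, leadingCoeff, leadingCoeff, ← h.natDegree_eq]
  constructor <;> intro h1 <;> rw [h1] at hlead
  · exact hlead.unique HasQSeries.one
  · exact hlead.fun_unique HasQSeries.one

lemma eval {F : ℍ → ℂ} {Q : ℂ⟦X⟧} (hF : HasQSeries F Q) : HasQSeries (p.eval F) (P.eval Q) := by
  rw [eval_eq_sum_range, eval_eq_sum_range, ← h.natDegree_eq]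
  exact HasQSeries.sum _ fun r _ => (h r).mul (hF.pow r)

lemma scaleRoots {F : ℍ → ℂ} {Q : ℂ⟦X⟧} (hF : HasQSeries F Q) :
    HasQPolynomial (p.scaleRoots F) (P.scaleRoots Q) := fun r => by
  rw [coeff_scaleRoots, coeff_scaleRoots, ← h.natDegree_eq]
  exact (h r).mul (hF.pow _)

end HasQPolynomial

lemma exists_polynomial_coeff_eq {R : Type*} [Semiring R] {u : ℕ → R} {n : ℕ}
    (hu : ∀ r, n < r → u r = 0) : ∃ p : R[X], ∀ r, p.coeff r = u r := by
  refine ⟨(PowerSeries.mk u).trunc (n + 1), fun r => ?_⟩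
  rw [PowerSeries.coeff_trunc, PowerSeries.coeff_mk]
  split_ifs with hr
  · rfl
  · exact (hu r (by omega)).symm

theorem IsModularPolynomial.exists_map (σ : ℂ →+* ℂ) {l w : ℤ} {p : (ℍ → ℂ)[X]}
    (hp : IsModularPolynomial l w p) :
    ∃ P p', HasQPolynomial p P ∧ IsModularPolynomial l w p' ∧
      HasQPolynomial p' (P.map (PowerSeries.map σ)) := by
  choose g hg using hp
  choose g' hg' using fun r => exists_modularForm_qExpansion_eq_map σ (g r)
  have hzero (r : ℕ) (hr : p.natDegree < r) : qExpansion 1 (g r) = 0 := by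
    rw [hg, coeff_eq_zero_of_natDegree_lt hr]
    have h0 : HasQSeries 0 (qExpansion 1 0) := by
      simpa using hasQSeries_modularForm (0 : ModularForm 𝒮ℒ 0)
    exact (HasQSeries.zero.unique h0).symm
  obtain ⟨P, hP⟩ := exists_polynomial_coeff_eq hzero
  obtain ⟨p', hp'⟩ := exists_polynomial_coeff_eq (u := fun r => ⇑(g' r)) (n := p.natDegree)
    fun r hr => by
      have hQ := hasQSeries_modularForm (g' r)
      rw [hg', hzero r hr, map_zero] at hQ
      exact hQ.fun_unique HasQSeries.zero
  refine ⟨P, p', fun r => ?_, fun r => ⟨g' r, (hp' r).symm⟩, fun r => ?_⟩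
  · rw [hP, ← hg]
    exact hasQSeries_modularForm (g r)
  · rw [hp', coeff_map, hP, ← hg']
    exact hasQSeries_modularForm (g' r)

/-! ### Interpolation over a system of conjugates -/

/-- A family of functions that `SL(2, ℤ)` permutes by its action of weight `k`, such as the
conjugates of a modular form on a subgroup of finite index. -/
structure IsConjugateSystem {Q : Type*} [MulAction SL(2, ℤ) Q] (k : ℤ) (Φ : Q → ℍ → ℂ) : Prop where
  mem_boundedHolomorphic : ∀ q, Φ q ∈ boundedHolomorphic
  slash_eq : ∀ (γ : SL(2, ℤ)) (q : Q), Φ q ∣[k] γ = Φ (γ⁻¹ • q)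

/-- The numerator `∑ q, Φ q * ∏ j ≠ q, (X - H j)` of the Lagrange interpolation formula; at a node
`H q` its value is that of `Φ q` times the derivative of `∏ j, (X - H j)`. -/
def lagrangeNumerator {Q R : Type*} [Fintype Q] [DecidableEq Q] [CommRing R] (Φ H : Q → R) : R[X] :=
  ∑ q, C (Φ q) * Lagrange.nodal (Finset.univ.erase q) H

lemma eval_lagrangeNumerator {Q R : Type*} [Fintype Q] [DecidableEq Q] [CommRing R] (Φ H : Q → R)
    (q : Q) : (lagrangeNumerator Φ H).eval (H q) =
      Φ q * (Lagrange.nodal (Finset.univ.erase q) H).eval (H q) := by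
  rw [lagrangeNumerator, eval_finsetSum, Finset.sum_eq_single q _ (by simp), eval_mul, eval_C]
  intro j _ hj
  rw [eval_mul, Lagrange.eval_nodal_at_node (Finset.mem_erase.2 ⟨hj.symm, Finset.mem_univ q⟩),
    mul_zero]

lemma coeff_nodal_mem {Q R : Type*} [CommRing R] (A : Subring R) {S : Q → R} (hS : ∀ q, S q ∈ A)
    (s : Finset Q) (r : ℕ) : (Lagrange.nodal s S).coeff r ∈ A := by
  have hlift :
      Lagrange.nodal s S = (Lagrange.nodal s fun q => (⟨S q, hS q⟩ : A)).map A.subtype := by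
    simp [Lagrange.nodal_eq, Polynomial.map_prod]
  rw [hlift, coeff_map]
  exact SetLike.coe_mem _

lemma nodal_comp_C_mul_X {Q R : Type*} [CommRing R] (s : Finset Q) (S : Q → R) (a : R) :
    (Lagrange.nodal s fun q => a * S q).comp (C a * X) = C a ^ s.card * Lagrange.nodal s S := by
  simp only [Lagrange.nodal_eq, prod_comp, sub_comp, X_comp, C_comp]
  simp only [C_mul, ← mul_sub, Finset.prod_mul_distrib, Finset.prod_const]

lemma specialize_nodal {Q : Type*} (s : Finset Q) (S : Q → ℍ → ℂ) (τ : ℍ) :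
    specialize (Lagrange.nodal s S) τ = Lagrange.nodal s fun q => S q τ := by
  simp [specialize, Lagrange.nodal_eq, Polynomial.map_prod]

namespace IsConjugateSystem

variable {Q : Type*} [MulAction SL(2, ℤ) Q] {k l : ℤ} {Φ H : Q → ℍ → ℂ}

lemma apply_smul (h : IsConjugateSystem k Φ) (γ : SL(2, ℤ)) (τ : ℍ) (q : Q) :
    Φ q (γ • τ) = denom γ τ ^ k * Φ (γ⁻¹ • q) τ := by
  rw [apply_smul_eq_denom_zpow_mul k (Φ q), h.slash_eq]

variable [Fintype Q]

theorem isModularPolynomial_nodal (h : IsConjugateSystem k Φ) :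
    IsModularPolynomial k (k * Fintype.card Q) (Lagrange.nodal Finset.univ Φ) := by
  refine isModularPolynomial_of_comp (fun r => coeff_nodal_mem _ h.mem_boundedHolomorphic _ r)
    fun γ τ => ?_
  simp only [specialize_nodal, h.apply_smul]
  rw [nodal_comp_C_mul_X, Finset.card_univ, ← C_pow, zpow_mul, zpow_natCast]
  congr 1
  exact (MulAction.toPerm γ⁻¹).prod_comp Finset.univ (fun q => X - C (Φ q τ)) (by simp)

theorem isModularPolynomial_lagrangeNumerator [DecidableEq Q] (hΦ : IsConjugateSystem k Φ)
    (hH : IsConjugateSystem l H) : IsModularPolynomial l (k + l * (Fintype.card Q - 1 : ℕ))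
      (lagrangeNumerator Φ H) := by
  refine isModularPolynomial_of_comp (fun r => ?_) fun γ τ => ?_
  · rw [lagrangeNumerator, finsetSum_coeff]
    exact sum_mem fun q _ => by
      rw [coeff_C_mul]
      exact mul_mem (hΦ.mem_boundedHolomorphic q) (coeff_nodal_mem _ hH.mem_boundedHolomorphic _ r)
  · have hperm (q : Q) : Lagrange.nodal (Finset.univ.erase q) (fun j => H (γ⁻¹ • j) τ) =
        Lagrange.nodal (Finset.univ.erase (γ⁻¹ • q)) fun j => H j τ :=
      Finset.prod_equiv (MulAction.toPerm γ⁻¹) (by simp) (by simp)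
    have hJ := denom_ne_zero γ τ
    simp only [lagrangeNumerator, specialize, Polynomial.map_sum, Polynomial.map_mul, map_C,
      Pi.evalRingHom_apply, specialize_nodal, hΦ.apply_smul, hH.apply_smul]
    rw [← coe_compRingHom_apply, map_sum, Finset.mul_sum]
    refine Fintype.sum_equiv (MulAction.toPerm γ⁻¹) _ _ fun q => ?_
    rw [coe_compRingHom_apply, mul_comp, C_comp, nodal_comp_C_mul_X, hperm,
      Finset.card_erase_of_mem (Finset.mem_univ q), Finset.card_univ, zpow_add₀ hJ, zpow_mul,
      zpow_natCast]
    simp only [C_mul, C_pow, MulAction.toPerm_apply]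
    ring

end IsConjugateSystem

end ModularPolynomials

/-! ### Quotients of holomorphic functions -/

section Quotients

open UpperHalfPlane hiding I
open Filter Asymptotics Set
open scoped Manifold Topology

theorem exists_analyticOnNhd_mul_eq {U : Set ℂ} (hU : IsPreconnected U) {c g : ℂ → ℂ}
    (hc : AnalyticOnNhd ℂ c U) (hg : AnalyticOnNhd ℂ g U) (hg0 : ∃ z ∈ U, g z ≠ 0)
    (hcg : ∀ z ∈ U, c =O[𝓝 z] g) : ∃ F, AnalyticOnNhd ℂ F U ∧ EqOn (F * g) c U := by
  obtain ⟨z₀, hz₀, hgz₀⟩ := hg0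
  have hne (z) (hz : z ∈ U) : ∀ᶠ w in 𝓝[≠] z, g w ≠ 0 :=
    not_frequently.1 fun h =>
      hgz₀ (hg.eqOn_zero_of_preconnected_of_frequently_eq_zero hU hz h hz₀)
  have hmero : MeromorphicOn (c / g) U := hc.meromorphicOn.div hg.meromorphicOn
  have hF : AnalyticOnNhd ℂ (toMeromorphicNFOn (c / g) U) U := fun z hz => by
    rw [← (meromorphicNFOn_toMeromorphicNFOn _ U hz).meromorphicOrderAt_nonneg_iff_analyticAt,
      meromorphicOrderAt_toMeromorphicNFOn hmero hz]
    by_contra! hneg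
    have hbdd := (isBigO_iff_isBoundedUnder_le_div (hne z hz)).1
      ((hcg z hz).mono nhdsWithin_le_nhds)
    refine not_isBoundedUnder_of_tendsto_atTop
      (tendsto_norm_atTop_iff_cobounded.2 (tendsto_cobounded_of_meromorphicOrderAt_neg hneg)) ?_
    simpa [norm_div] using hbdd
  refine ⟨_, hF, fun z hz => EventuallyEq.eq_of_nhds (f := _ * g) ?_⟩
  rw [← ((hF z hz).mul (hg z hz)).continuousAt.eventuallyEq_nhds_iff_eventuallyEq_nhdsNE
    (hc z hz).continuousAt]
  filter_upwards [hmero.toMeromorphicNFOn_eq_self_on_nhdsNE hz, hne z hz] with w hw hgw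
  rw [Pi.mul_apply, hw, Pi.div_apply, div_mul_cancel₀ _ hgw]

theorem exists_mdifferentiable_mul_eq {C G : ℍ → ℂ} (hC : MDiff C) (hG : MDiff G) (hG0 : G ≠ 0)
    (hCG : ∀ τ, C =O[𝓝 τ] G) : ∃ F : ℍ → ℂ, MDiff F ∧ F * G = C := by
  obtain ⟨τ₀, hτ₀⟩ := Function.ne_iff.1 hG0
  have hanalytic {F : ℍ → ℂ} (hF : MDiff F) : AnalyticOnNhd ℂ (F ∘ ofComplex) {z | 0 < z.im} :=
    (UpperHalfPlane.mdifferentiable_iff.1 hF).analyticOnNhd isOpen_upperHalfPlaneSet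
  obtain ⟨F, hF, hFG⟩ := exists_analyticOnNhd_mul_eq (convex_halfSpace_im_gt 0).isPreconnected
    (hanalytic hC) (hanalytic hG) ⟨τ₀, τ₀.im_pos, by simpa using hτ₀⟩
    fun z hz => (hCG _).comp_tendsto (contMDiffAt_ofComplex (n := 0) hz).continuousAt
  refine ⟨fun τ => F τ, UpperHalfPlane.mdifferentiable_iff.2 ?_, funext fun τ => ?_⟩
  · exact hF.differentiableOn.congr fun z hz => by simp [ofComplex_apply_of_im_pos hz]
  · simpa using hFG τ.im_pos

end Quotients

/-! ### Roots of polynomials with holomorphic coefficients -/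

section RootBound

open UpperHalfPlane hiding I
open Asymptotics Polynomial Finset
open scoped Manifold Topology

lemma norm_le_of_monic_of_isRoot {p : ℂ[X]} (hp : p.Monic) {z : ℂ} (hz : p.IsRoot z) :
    ‖z‖ ≤ 1 + ∑ r ∈ range p.natDegree, ‖p.coeff r‖ := by
  have hle := (hz.norm_lt_cauchyBound hp.ne_zero).le
  have hsup : (range p.natDegree).sup (‖p.coeff ·‖₊) ≤ ∑ r ∈ range p.natDegree, ‖p.coeff r‖₊ :=
    Finset.sup_le fun r hr => single_le_sum (f := (‖p.coeff ·‖₊)) (fun _ _ => zero_le) hr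
  rw [cauchyBound, hp.leadingCoeff, nnnorm_one, div_one, add_comm] at hle
  simpa [← coe_nnnorm] using NNReal.coe_le_coe.2 (hle.trans (add_le_add_right hsup 1))

lemma eval_scaleRoots_mul_self {R : Type*} [CommRing R] (p : R[X]) (x g : R) :
    (p.scaleRoots (g * g)).eval (x * g * (x * g)) = (g * g) ^ p.natDegree * p.eval (x * x) := by
  rw [mul_mul_mul_comm, mul_comm (x * x)]
  exact scaleRoots_eval₂_mul (RingHom.id R) (x * x) (g * g)

/-- A bound at `τ` for the roots of the monic polynomial `specialize p τ`. -/
def rootBound (p : (ℍ → ℂ)[X]) (τ : ℍ) : ℝ := 1 + ∑ r ∈ range p.natDegree, ‖p.coeff r τ‖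

lemma one_le_rootBound (p : (ℍ → ℂ)[X]) (τ : ℍ) : 1 ≤ rootBound p τ :=
  le_add_of_nonneg_right (sum_nonneg fun _ _ => norm_nonneg _)

lemma norm_le_rootBound {p : (ℍ → ℂ)[X]} (hp : p.Monic) {τ : ℍ} {z : ℂ}
    (hz : (specialize p τ).IsRoot (z * z)) : ‖z‖ ≤ rootBound p τ := by
  have hbound := norm_le_of_monic_of_isRoot (hp.map _) hz
  simp only [hp.natDegree_map, coeff_map, Pi.evalRingHom_apply, norm_mul] at hbound
  change _ ≤ rootBound p τ at hbound
  nlinarith [one_le_rootBound p τ, norm_nonneg z]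

lemma norm_le_rootBound_mul {p : (ℍ → ℂ)[X]} (hp : p.Monic) {C G : ℍ → ℂ}
    (h : (p.scaleRoots (G * G)).eval (C * C) = 0) (τ : ℍ) : ‖C τ‖ ≤ rootBound p τ * ‖G τ‖ := by
  have hroot : ((specialize p τ).scaleRoots (G τ * G τ)).eval (C τ * C τ) = 0 := by
    have hmap := eval_apply_eq_eval_specialize (p.scaleRoots (G * G)) (C * C) τ
    rwa [specialize, map_scaleRoots _ _ _ (by simp [hp.leadingCoeff]), h, eq_comm] at hmap
  rcases eq_or_ne (G τ) 0 with hG | hG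
  · rw [hG, mul_zero, scaleRoots_zero, eval_smul, eval_pow, eval_X, (hp.map _).leadingCoeff,
      one_smul] at hroot
    simp [mul_self_eq_zero.1 (eq_zero_of_pow_eq_zero hroot), hG]
  · rw [← div_le_iff₀ (norm_pos_iff.2 hG), ← norm_div]
    refine norm_le_rootBound hp ?_
    rw [← div_mul_cancel₀ (C τ) hG, eval_scaleRoots_mul_self] at hroot
    exact (mul_eq_zero.1 hroot).resolve_left (pow_ne_zero _ (mul_ne_zero hG hG))

variable {p : (ℍ → ℂ)[X]} (hp : ∀ r, p.coeff r ∈ boundedHolomorphic)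
include hp

lemma continuous_rootBound : Continuous (rootBound p) :=
  continuous_const.add (continuous_finsetSum _ fun r _ => (hp r).1.continuous.norm)

lemma isBoundedAtImInfty_of_eval_mul_self_eq_zero (hmonic : p.Monic) {F : ℍ → ℂ}
    (hF : p.eval (F * F) = 0) : IsBoundedAtImInfty F := by
  have hroot (τ : ℍ) : ‖F τ‖ ≤ rootBound p τ :=
    norm_le_rootBound hmonic <| by
      rw [IsRoot.def, ← Pi.mul_apply, ← eval_apply_eq_eval_specialize, hF, Pi.zero_apply]
  refine (IsBigO.of_norm_le hroot).trans ?_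
  exact (isBigO_const_const 1 one_ne_zero _).add (IsBigO.fun_sum fun r _ => (hp r).2.norm_left)

lemma mdifferentiable_eval {F : ℍ → ℂ} (hF : MDiff F) : MDiff (p.eval F) := by
  rw [eval_eq_sum_range]
  exact MDifferentiable.sum fun r _ => (hp r).1.mul (MDifferentiable.pow hF r)

theorem exists_mul_eq_and_eval_mul_self_eq_zero (hmonic : p.Monic) {C G : ℍ → ℂ} (hC : MDiff C)
    (hG : MDiff G) (hG0 : G ≠ 0) (h : (p.scaleRoots (G * G)).eval (C * C) = 0) :
    ∃ F : ℍ → ℂ, MDiff F ∧ F * G = C ∧ p.eval (F * F) = 0 := by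
  have hCG (τ : ℍ) : C =O[𝓝 τ] G := by
    have hbound : C =O[𝓝 τ] fun τ => rootBound p τ * ‖G τ‖ :=
      IsBigO.of_norm_le (norm_le_rootBound_mul hmonic h)
    refine hbound.trans ?_
    simpa using ((continuous_rootBound hp).continuousAt.isBigO_one ℝ).mul
      (isBigO_refl G (𝓝 τ)).norm_left.norm_right
  obtain ⟨F, hF, rfl⟩ := exists_mdifferentiable_mul_eq hC hG hG0 hCG
  rw [eval_scaleRoots_mul_self] at h
  exact ⟨F, hF, rfl, ((UpperHalfPlane.mul_eq_zero_iff (MDifferentiable.pow (hG.mul hG) _)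
    (mdifferentiable_eval hp (hF.mul hF))).1 h).resolve_left fun h0 =>
      hG0 (funext fun τ => mul_self_eq_zero.1 (eq_zero_of_pow_eq_zero (congrFun h0 τ)))⟩

end RootBound

/-! ### The parameter at the cusp `∞` -/

section CuspParam

open UpperHalfPlane hiding I
open Filter Function PowerSeries
open scoped Manifold Topology

/-- The local parameter `exp (2πiτ)` at the cusp `∞`, by powers of which poles there are cleared. -/
def cuspParam (τ : ℍ) : ℂ := Periodic.qParam 1 τ

lemma cuspParam_ne_zero (τ : ℍ) : cuspParam τ ≠ 0 := Periodic.qParam_ne_zero _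

namespace HasQSeries

variable {F : ℍ → ℂ} {P : ℂ⟦X⟧}

lemma of_mul_cuspParam_pow {N : ℕ} (h : HasQSeries (F * cuspParam ^ N) (P * X ^ N)) :
    HasQSeries F P := fun τ => by
  have hq := pow_ne_zero N (cuspParam_ne_zero τ)
  have hsum := h τ
  rw [← hasSum_nat_add_iff' N, Finset.sum_eq_zero, sub_zero] at hsum
  · convert! hsum.div_const (cuspParam τ ^ N) using 2 with m
    · rw [coeff_mul_X_pow, pow_add, ← mul_assoc, ← cuspParam, mul_div_cancel_right₀ _ hq]
    · simp [hq]
  · intro m hm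
    simp [coeff_mul_X_pow', Finset.mem_range.1 hm]

lemma isZeroAtImInfty (h : HasQSeries F P) (hP : P.coeff 0 = 0) : IsZeroAtImInfty F := by
  obtain ⟨R, rfl⟩ : X ∣ P := X_dvd_iff.2 (by simpa using hP)
  have hR : HasQSeries (fun τ => F τ / cuspParam τ) R := by
    refine of_mul_cuspParam_pow (N := 1) ?_
    convert! h using 1
    · ext τ
      simp [cuspParam_ne_zero]
    · ring
  have hq : IsZeroAtImInfty cuspParam :=
    UpperHalfPlane.qParam_tendsto_atImInfty one_pos
  convert! hq.mul_boundedAtFilter hR.isBoundedAtImInfty using 1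
  ext τ
  simp [mul_div_cancel₀, cuspParam_ne_zero]

lemma exists_inv (h : HasQSeries F P) (hP : P.coeff 0 = 1) (hF : ∀ τ, F τ ≠ 0) :
    ∃ R, HasQSeries F⁻¹ R ∧ P * R = 1 := by
  have hd : MDiff F⁻¹ := UpperHalfPlane.mdifferentiable_iff.2
    ((UpperHalfPlane.mdifferentiable_iff.1 h.mdifferentiable).inv fun z _ => hF _)
  have hlim : Tendsto F atImInfty (𝓝 1) := by
    have hzero : Tendsto (F - 1) atImInfty (𝓝 0) := (h.sub one).isZeroAtImInfty (by
      rw [map_sub, hP, coeff_zero_one, sub_self])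
    simpa using hzero.add_const 1
  have hb : IsBoundedAtImInfty F⁻¹ := (hlim.inv₀ one_ne_zero).isBigO_one ℝ
  have hinv := hasQSeries_qExpansion hd hb fun τ => by
    rw [Pi.inv_apply, h.one_vadd, Pi.inv_apply]
  refine ⟨_, hinv, (h.mul hinv).unique ?_⟩
  convert! HasQSeries.one using 1
  ext τ
  simp [hF]

end HasQSeries

end CuspParam

/-! ### Conjugates of forms for `Γ₀(D)` -/

section Conjugates

open UpperHalfPlane hiding I
open CongruenceSubgroup Filter Polynomial
open scoped Manifold MatrixGroups ModularForm Topology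

lemma mem_Gamma0_iff_dvd {D : ℕ} {γ : SL(2, ℤ)} : γ ∈ Gamma0 D ↔ (D : ℤ) ∣ γ 1 0 := by
  rw [Gamma0_mem, ZMod.intCast_zmod_eq_zero_iff_dvd]

lemma mdifferentiable_slash {F : ℍ → ℂ} (hF : MDiff F) (k : ℤ) (γ : SL(2, ℤ)) :
    MDiff (F ∣[k] γ) := by
  rw [ModularForm.SL_slash]
  exact hF.slash k _

namespace IsGamma0Form

variable {D : ℕ} {χ χ' : ℤ → ℂ} {k k' : ℤ} {F G : ℍ → ℂ}

lemma mul (h : IsGamma0Form D χ k F) (h' : IsGamma0Form D χ' k' G) :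
    IsGamma0Form D (χ * χ') (k + k') (F * G) where
  mdifferentiable := h.mdifferentiable.mul h'.mdifferentiable
  slash_eq γ hγ := by
    rw [ModularForm.mul_slash_SL2, h.slash_eq γ hγ, h'.slash_eq γ hγ, smul_mul_smul_comm,
      Pi.mul_apply]
  isBoundedAtImInfty_slash γ := by
    rw [ModularForm.mul_slash_SL2]
    exact (h.isBoundedAtImInfty_slash γ).mul (h'.isBoundedAtImInfty_slash γ)

lemma congr_char (h : IsGamma0Form D χ k F) (hχ : ∀ a, IsCoprime a (D : ℤ) → χ a = χ' a) :
    IsGamma0Form D χ' k F :=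
  ⟨h.mdifferentiable, fun γ hγ => by rw [h.slash_eq γ hγ, hχ _ (isCoprime_of_dvd_lowerLeft hγ)],
    h.isBoundedAtImInfty_slash⟩

lemma mul_of_isQuadDirChar (hχ : IsQuadDirChar D χ) (h : IsGamma0Form D χ k F)
    (h' : IsGamma0Form D χ k' G) : IsGamma0Form D 1 (k + k') (F * G) :=
  (h.mul h').congr_char fun _ ha => hχ.mul_self_eq_one ha

lemma slash_eq_self (h : IsGamma0Form D 1 k F) {γ : SL(2, ℤ)} (hγ : γ ∈ Gamma0 D) :
    F ∣[k] γ = F := by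
  rw [h.slash_eq γ (mem_Gamma0_iff_dvd.1 hγ), Pi.one_apply, one_smul]

lemma hasQSeries (h : IsGamma0Form D χ k F) (hχ : χ 1 = 1) : HasQSeries F (qExpansion 1 F) := by
  have hbdd := h.isBoundedAtImInfty_slash 1
  rw [SlashAction.slash_one] at hbdd
  refine hasQSeries_qExpansion h.mdifferentiable hbdd fun τ => ?_
  have hT := congrFun (h.slash_eq ModularGroup.T (by simp [ModularGroup.T])) τ
  have hdenom : denom ModularGroup.T τ = 1 := by
    rw [ModularGroup.denom_apply]
    simp [ModularGroup.T]
  have hchar : χ (ModularGroup.T 1 1) = 1 := by simpa [ModularGroup.T] using hχ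
  rwa [ModularForm.SL_slash_apply, UpperHalfPlane.modular_T_smul, hdenom, one_zpow, mul_one,
    hchar, one_smul] at hT

end IsGamma0Form

/-- The conjugates `F ∣ γ⁻¹` of a form `F` on `Γ₀(D)` with trivial character, indexed by the cosets
`γ Γ₀(D)`. -/
def gamma0Conjugates (D : ℕ) (k : ℤ) (F : ℍ → ℂ) (q : SL(2, ℤ) ⧸ Gamma0 D) : ℍ → ℂ :=
  F ∣[k] (q.out)⁻¹

namespace IsGamma0Form

variable {D : ℕ} {k : ℤ} {F : ℍ → ℂ} (h : IsGamma0Form D 1 k F)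
include h

lemma gamma0Conjugates_mk (γ : SL(2, ℤ)) :
    gamma0Conjugates D k F (γ : SL(2, ℤ) ⧸ Gamma0 D) = F ∣[k] γ⁻¹ := by
  obtain ⟨u, hu⟩ := QuotientGroup.mk_out_eq_mul (Gamma0 D) γ
  rw [gamma0Conjugates, hu, mul_inv_rev, SlashAction.slash_mul, h.slash_eq_self (inv_mem u.2)]

lemma gamma0Conjugates_one :
    gamma0Conjugates D k F ((1 : SL(2, ℤ)) : SL(2, ℤ) ⧸ Gamma0 D) = F := by
  rw [h.gamma0Conjugates_mk, inv_one, SlashAction.slash_one]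

lemma isConjugateSystem : IsConjugateSystem k (gamma0Conjugates D k F) where
  mem_boundedHolomorphic _ :=
    ⟨mdifferentiable_slash h.mdifferentiable _ _, h.isBoundedAtImInfty_slash _⟩
  slash_eq γ q := by
    obtain ⟨δ, rfl⟩ := QuotientGroup.mk_surjective q
    rw [MulAction.Quotient.smul_coe, h.gamma0Conjugates_mk, h.gamma0Conjugates_mk,
      ← SlashAction.slash_mul, smul_eq_mul, mul_inv_rev, inv_inv]

end IsGamma0Form

lemma isConjugateSystem_one {Q : Type*} [MulAction SL(2, ℤ) Q] :
    IsConjugateSystem 0 fun _ : Q => (1 : ℍ → ℂ) where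
  mem_boundedHolomorphic _ := one_mem _
  slash_eq γ _ := ModularForm.is_invariant_one γ

lemma eventually_cuspSeparator_ne_gamma0Conjugates {D : ℕ} {q : SL(2, ℤ) ⧸ Gamma0 D}
    (hq : q ≠ ((1 : SL(2, ℤ)) : SL(2, ℤ) ⧸ Gamma0 D)) :
    ∀ᶠ τ in atImInfty, cuspSeparator D τ ≠ gamma0Conjugates D 4 (cuspSeparator D) q τ := by
  obtain ⟨γ, rfl⟩ := QuotientGroup.mk_surjective q
  have hγ : ¬ (D : ℤ) ∣ γ⁻¹ 1 0 := by
    rw [← mem_Gamma0_iff_dvd]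
    intro hmem
    refine hq (Eq.symm ?_)
    rw [QuotientGroup.eq, inv_one, one_mul]
    exact inv_mem_iff.1 hmem
  obtain ⟨ε, hε, A, hA⟩ := exists_forall_le_norm_cuspSeparator_slash hγ
  have hzero : IsZeroAtImInfty (cuspSeparator D) :=
    (hasQSeries_cuspSeparator D).isZeroAtImInfty (by simp [divisorSeries])
  filter_upwards [(atImInfty_mem _).2 ⟨A, hA⟩,
    (tendsto_zero_iff_norm_tendsto_zero.1 hzero).eventually_lt_const hε] with τ hlow hup heq
  rw [heq, (isGamma0Form_cuspSeparator D).gamma0Conjugates_mk] at hup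
  exact hup.not_ge hlow

lemma eval_nodal_cuspSeparator_ne_zero {D : ℕ} {s : Finset (SL(2, ℤ) ⧸ Gamma0 D)}
    (hs : ((1 : SL(2, ℤ)) : SL(2, ℤ) ⧸ Gamma0 D) ∉ s) :
    (Lagrange.nodal s (gamma0Conjugates D 4 (cuspSeparator D))).eval (cuspSeparator D) ≠ 0 := by
  have hne : ∀ᶠ τ in atImInfty, ∀ q ∈ s,
      cuspSeparator D τ ≠ gamma0Conjugates D 4 (cuspSeparator D) q τ :=
    (eventually_all_finset s).2 fun q hq =>
      eventually_cuspSeparator_ne_gamma0Conjugates (ne_of_mem_of_not_mem hq hs)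
  obtain ⟨τ, hτ⟩ := hne.exists
  intro h
  have hτ0 := congrFun h τ
  rw [Lagrange.eval_nodal, Finset.prod_apply, Pi.zero_apply, Finset.prod_eq_zero_iff] at hτ0
  obtain ⟨q, hq, hqτ⟩ := hτ0
  exact hτ q hq (sub_eq_zero.1 hqτ)

/-- Lagrange interpolation of the conjugates of `F` at those of `cuspSeparator D`. -/
theorem IsGamma0Form.exists_mul_eval_cuspSeparator_eq {D : ℕ} [NeZero D] {k : ℤ} {F : ℍ → ℂ}
    (hF : IsGamma0Form D 1 k F) :
    ∃ (w : ℤ) (a b : (ℍ → ℂ)[X]), IsModularPolynomial 4 (k + w) a ∧ IsModularPolynomial 4 w b ∧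
      b.eval (cuspSeparator D) ≠ 0 ∧
      F * b.eval (cuspSeparator D) = a.eval (cuspSeparator D) := by
  classical
  have : Fintype (SL(2, ℤ) ⧸ Gamma0 D) := Fintype.ofFinite _
  have hH := isGamma0Form_cuspSeparator D
  let H := gamma0Conjugates D 4 (cuspSeparator D)
  have hval (Φ : SL(2, ℤ) ⧸ Gamma0 D → ℍ → ℂ) := eval_lagrangeNumerator Φ H (1 : SL(2, ℤ))
  simp only [H, hH.gamma0Conjugates_one] at hval
  refine ⟨_, lagrangeNumerator (gamma0Conjugates D k F) H, lagrangeNumerator (fun _ => 1) H,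
    hF.isConjugateSystem.isModularPolynomial_lagrangeNumerator hH.isConjugateSystem,
    by simpa using isConjugateSystem_one.isModularPolynomial_lagrangeNumerator hH.isConjugateSystem,
    ?_, ?_⟩
  · rw [hval, one_mul]
    exact eval_nodal_cuspSeparator_ne_zero (by simp)
  · rw [hval, hval, one_mul, hF.gamma0Conjugates_one]

/-- The characteristic polynomial of `F` over the modular forms of level one. -/
theorem IsGamma0Form.exists_monic_eval_eq_zero {D : ℕ} [NeZero D] {k : ℤ} {F : ℍ → ℂ}
    (hF : IsGamma0Form D 1 k F) :
    ∃ (w : ℤ) (p : (ℍ → ℂ)[X]), p.Monic ∧ IsModularPolynomial k w p ∧ p.eval F = 0 := by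
  have : Fintype (SL(2, ℤ) ⧸ Gamma0 D) := Fintype.ofFinite _
  refine ⟨_, _, Lagrange.nodal_monic, hF.isConjugateSystem.isModularPolynomial_nodal, ?_⟩
  nth_rw 1 [← hF.gamma0Conjugates_one]
  exact Lagrange.eval_nodal_at_node (Finset.mem_univ _)

end Conjugates

/-! ### Galois conjugation of forms for `Γ₀(D)` -/

section Galois

open UpperHalfPlane hiding I
open CongruenceSubgroup Polynomial
open scoped Manifold MatrixGroups ModularForm PowerSeries

lemma eval_map_of_mem_rationalSeries (σ : ℂ →+* ℂ) (R : ℂ⟦X⟧[X]) {Q : ℂ⟦X⟧}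
    (hQ : Q ∈ rationalSeries) :
    (R.map (PowerSeries.map σ)).eval Q = (R.eval Q).map σ := by
  nth_rw 1 [← map_eq_self_of_mem_rationalSeries σ hQ]
  exact eval_map_apply _ _

namespace IsGamma0Form

variable {D : ℕ} [NeZero D] {χ : ℤ → ℂ} {k : ℤ} {F : ℍ → ℂ} {P : ℂ⟦X⟧}
  (hF : IsGamma0Form D χ k F) (hχ : IsQuadDirChar D χ) (hP : HasQSeries F P) (σ : ℂ →+* ℂ)
include hF hχ hP

lemma exists_galois_fraction :
    ∃ (w : ℤ) (C G : ℍ → ℂ) (g : ℂ⟦X⟧), HasQSeries C (P.map σ * g) ∧ HasQSeries G g ∧ g ≠ 0 ∧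
      ∀ γ ∈ Gamma0 D, C ∣[k + w] γ = C ∧ G ∣[w] γ = χ (γ 1 1) • G := by
  obtain ⟨n, E, Q, hE, hQ, hQmem, hQ0⟩ := exists_isGamma0Form_rational hχ
  obtain ⟨w, a, b, ha, hb, hb0, hab⟩ :=
    (hF.mul_of_isQuadDirChar hχ hE).exists_mul_eval_cuspSeparator_eq
  obtain ⟨A, a', hA, ha', hA'⟩ := ha.exists_map σ
  obtain ⟨B, b', hB, hb', hB'⟩ := hb.exists_map σ
  have hH := hasQSeries_cuspSeparator D
  set h := divisorSeries (notDvdIndicator D) 4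
  have hmem : h ∈ rationalSeries := divisorSeries_mem_rationalSeries exists_rat_eq_notDvdIndicator 4
  have hPQ : P * Q * B.eval h = A.eval h :=
    ((hP.mul hQ).mul (hB.eval hH)).unique (hab ▸ hA.eval hH)
  have hg : Q * (B.map (PowerSeries.map σ)).eval h = (Q * B.eval h).map σ := by
    rw [eval_map_of_mem_rationalSeries σ B hmem, map_mul, map_eq_self_of_mem_rationalSeries σ hQmem]
  have hC : (A.map (PowerSeries.map σ)).eval h =
      P.map σ * (Q * (B.map (PowerSeries.map σ)).eval h) := by
    rw [eval_map_of_mem_rationalSeries σ A hmem, hg, ← hPQ, mul_assoc, map_mul]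
  have hB0 : B.eval h ≠ 0 := fun h0 => hb0 ((h0 ▸ hB.eval hH).fun_unique HasQSeries.zero)
  refine ⟨n + w, _, _, _, hC ▸ hA'.eval hH, hQ.mul (hB'.eval hH), ?_, fun γ hγ => ⟨?_, ?_⟩⟩
  · rw [hg, Ne, map_eq_zero_iff _ (PowerSeries.map_injective σ σ.injective)]
    exact mul_ne_zero hQ0 hB0
  · rw [← add_assoc, ha'.eval_slash, (isGamma0Form_cuspSeparator D).slash_eq_self hγ]
  · rw [ModularForm.mul_slash_SL2, hE.slash_eq γ (mem_Gamma0_iff_dvd.1 hγ), hb'.eval_slash,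
      (isGamma0Form_cuspSeparator D).slash_eq_self hγ, smul_mul_assoc]

lemma exists_galois_equation :
    ∃ (w : ℤ) (p : (ℍ → ℂ)[X]) (R : ℂ⟦X⟧[X]), p.Monic ∧ IsModularPolynomial (k + k) w p ∧
      HasQPolynomial p R ∧ R.eval (P.map σ * P.map σ) = 0 := by
  obtain ⟨w, p, hmonic, hp, hFp⟩ := (hF.mul_of_isQuadDirChar hχ hF).exists_monic_eval_eq_zero
  obtain ⟨R, p', hR, hp', hR'⟩ := hp.exists_map σ
  refine ⟨w, p', _, hR'.monic_iff.2 ((hR.monic_iff.1 hmonic).map _), hp', hR', ?_⟩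
  rw [← map_mul, eval_map_apply, (hR.eval (hP.mul hP)).unique (hFp ▸ HasQSeries.zero), map_zero]

theorem exists_galois_conjugate : ∃ F', IsGamma0Form D χ k F' ∧ HasQSeries F' (P.map σ) := by
  obtain ⟨w, C, G, g, hC, hG, hg0, htr⟩ := hF.exists_galois_fraction hχ hP σ
  obtain ⟨v, p, R, hmonic, hp, hR, hroot⟩ := hF.exists_galois_equation hχ hP σ
  have hG0 : G ≠ 0 := fun h => hg0 (hG.unique (h ▸ HasQSeries.zero))
  have hCG : (p.scaleRoots (G * G)).eval (C * C) = 0 := by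
    refine ((hR.scaleRoots (hG.mul hG)).eval (hC.mul hC)).fun_unique ?_
    rw [eval_scaleRoots_mul_self, hroot, mul_zero]
    exact HasQSeries.zero
  obtain ⟨F', hF', rfl, hpF'⟩ := exists_mul_eq_and_eval_mul_self_eq_zero
    hp.coeff_mem_boundedHolomorphic hmonic hC.mdifferentiable hG.mdifferentiable hG0 hCG
  have hform : IsGamma0Form D χ k F' := by
    refine ⟨hF', fun γ hγ => ?_, fun γ => ?_⟩
    · obtain ⟨hCγ, hGγ⟩ := htr γ (mem_Gamma0_iff_dvd.2 hγ)
      have hsq := hχ.mul_self_eq_one (isCoprime_of_dvd_lowerLeft hγ)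
      have hcancel : (χ (γ 1 1) • (F' ∣[k] γ) - F') * G = 0 := by
        rw [sub_mul, smul_mul_assoc, ← mul_smul_comm, ← hGγ, ← ModularForm.mul_slash_SL2, hCγ,
          sub_self]
      have hχF := ((UpperHalfPlane.mul_eq_zero_iff
        (((mdifferentiable_slash hF' k γ).const_smul _).sub hF') hG.mdifferentiable).1
          hcancel).resolve_right hG0
      rw [← sub_eq_zero.1 hχF, smul_smul, hsq, one_smul, sub_eq_zero.1 hχF]
    · refine isBoundedAtImInfty_of_eval_mul_self_eq_zero hp.coeff_mem_boundedHolomorphic hmonic ?_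
      rw [← ModularForm.mul_slash_SL2, ← hp.eval_slash, hpF', SlashAction.zero_slash]
  have hF'Q := hform.hasQSeries hχ.map_one
  refine ⟨F', hform, ?_⟩
  rwa [mul_right_cancel₀ hg0 ((hF'Q.mul hG).unique hC)] at hF'Q

end IsGamma0Form

end Galois

/-! ### Forms of nonpositive weight -/

section Vanishing

open UpperHalfPlane hiding I
open CongruenceSubgroup Matrix
open scoped Manifold MatrixGroups ModularForm

namespace IsGamma0Form

variable {D : ℕ} {χ : ℤ → ℂ} {k : ℤ} {F : ℍ → ℂ}

lemma exists_modularForm_coe_eq (h : IsGamma0Form D 1 k F) :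
    ∃ g : ModularForm ((Gamma0 D).map (SpecialLinearGroup.mapGL ℝ)) k, ⇑g = F :=
  ⟨{ toFun := F
     slash_action_eq' := by
       rintro _ ⟨γ, hγ, rfl⟩
       exact h.slash_eq_self hγ
     holo' := h.mdifferentiable
     bdd_at_cusps' := by
       intro c hc
       rw [OnePoint.isBoundedAt_iff_forall_SL2Z]
       · exact fun γ _ => h.isBoundedAtImInfty_slash γ
       · exact hc.mono (by rintro _ ⟨γ, -, rfl⟩; exact ⟨γ, rfl⟩) }, rfl⟩

theorem eq_zero_of_weight_nonpos [NeZero D] (h : IsGamma0Form D χ k F) (hχ : IsQuadDirChar D χ)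
    (hk : k ≤ 0) (h0 : k = 0 → IsZeroAtImInfty F) : F = 0 := by
  have hFF := h.mul_of_isQuadDirChar hχ h
  have hsq : F * F = 0 := by
    rcases hk.lt_or_eq with hk | rfl
    · obtain ⟨g, hg⟩ := hFF.exists_modularForm_coe_eq
      rw [← hg, ModularForm.isZero_of_neg_weight (by omega) g, FunLike.coe_zero]
    · rw [add_zero] at hFF
      obtain ⟨g, hg⟩ := hFF.exists_modularForm_coe_eq
      obtain ⟨a, ha⟩ := ModularForm.eq_const_of_weight_zero g
      have hlim : IsZeroAtImInfty (F * F) := (h0 rfl).mul_boundedAtFilter (h0 rfl).boundedAtFilter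
      rw [← hg, ha] at hlim
      rw [← hg, ha, tendsto_nhds_unique tendsto_const_nhds hlim]
      rfl
  exact funext fun τ => mul_self_eq_zero.1 (congrFun hsq τ)

end IsGamma0Form

end Vanishing

/-! ### Weakly holomorphic forms -/

section WeakForms

open UpperHalfPlane hiding I
open CongruenceSubgroup PowerSeries
open scoped Manifold MatrixGroups ModularForm

/-- `f` is a weakly holomorphic modular form of weight `k` for `Γ₀(D)` with character `χ`,
holomorphic outside the cusp `∞`, and `q ^ N * f` has the `q`-series `p`; in particular `f` is
holomorphic on `ℍ` with a pole of order at most `N` at `∞`. -/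
structure IsWeakGamma0Form (D : ℕ) (χ : ℤ → ℂ) (k : ℤ) (N : ℕ) (f : ℍ → ℂ) (p : ℂ⟦X⟧) : Prop where
  slash_eq : ∀ γ : SL(2, ℤ), (D : ℤ) ∣ γ 1 0 → f ∣[k] γ = χ (γ 1 1) • f
  isBoundedAtImInfty_slash : ∀ γ : SL(2, ℤ), ¬ (D : ℤ) ∣ γ 1 0 → IsBoundedAtImInfty (f ∣[k] γ)
  hasQSeries : HasQSeries (f * cuspParam ^ N) p

lemma pow_slash (A : ℍ → ℂ) (l : ℤ) (N : ℕ) (γ : SL(2, ℤ)) :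
    (A ^ N) ∣[l * (N : ℤ)] γ = (A ∣[l] γ) ^ N := by
  induction N with
  | zero =>
    rw [pow_zero, pow_zero, Nat.cast_zero, mul_zero]
    exact ModularForm.is_invariant_one γ
  | succ N ih =>
    rw [pow_succ, pow_succ, Nat.cast_succ, mul_add_one, ModularForm.mul_slash_SL2, ih]

lemma isBoundedAtImInfty_of_mul_pow {F H : ℍ → ℂ} {ε A : ℝ} (hε : 0 < ε)
    (hH : ∀ τ : ℍ, A ≤ τ.im → ε ≤ ‖H τ‖) {N : ℕ} (h : IsBoundedAtImInfty (F * H ^ N)) :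
    IsBoundedAtImInfty F := by
  obtain ⟨M, B, hM⟩ := isBoundedAtImInfty_iff.1 h
  refine isBoundedAtImInfty_iff.2 ⟨M / ε ^ N, max A B, fun τ hτ => ?_⟩
  have hbound := hM τ ((le_max_right _ _).trans hτ)
  rw [Pi.mul_apply, Pi.pow_apply, norm_mul, norm_pow] at hbound
  rw [le_div_iff₀ (by positivity)]
  refine le_trans ?_ hbound
  gcongr
  exact hH τ ((le_max_left _ _).trans hτ)

lemma exists_mem_rationalSeries_mul_X_eq {P : ℂ⟦X⟧} (hP : P ∈ rationalSeries)
    (h0 : P.coeff 0 = 0) : ∃ u ∈ rationalSeries, u * X = P := by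
  obtain ⟨u, rfl⟩ : X ∣ P := X_dvd_iff.2 (by simpa using h0)
  refine ⟨u, mem_rationalSeries_iff.2 fun m => ?_, mul_comm _ _⟩
  obtain ⟨q, hq⟩ := mem_rationalSeries_iff.1 hP (m + 1)
  exact ⟨q, by rwa [coeff_succ_X_mul] at hq⟩

namespace HasQSeries

variable {f A : ℍ → ℂ} {p u : ℂ⟦X⟧} {N : ℕ}

lemma mul_pow_of_mul_cuspParam_pow (h : HasQSeries (f * cuspParam ^ N) p)
    (hA : HasQSeries A (u * X)) : HasQSeries (f * A ^ N) (p * u ^ N) := by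
  refine of_mul_cuspParam_pow (N := N) ?_
  convert! h.mul (hA.pow N) using 1 <;> ring

lemma mul_cuspParam_pow_of_mul_pow (h : HasQSeries (f * A ^ N) (p * u ^ N))
    (hA : HasQSeries A (u * X)) (hu : u.coeff 0 = 1) (hA0 : ∀ τ, A τ ≠ 0) :
    HasQSeries (f * cuspParam ^ N) p := by
  have hAu : HasQSeries (A / cuspParam) u := by
    refine of_mul_cuspParam_pow (N := 1) ?_
    convert! hA using 1
    · ext τ
      simp [cuspParam_ne_zero]
    · rw [pow_one]
  obtain ⟨R, hR, huR⟩ := hAu.exists_inv hu fun τ => div_ne_zero (hA0 τ) (cuspParam_ne_zero τ)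
  convert! h.mul (hR.pow N) using 1
  · ext τ
    have hAτ := hA0 τ
    simp only [Pi.mul_apply, Pi.pow_apply, Pi.div_apply, inv_div, div_pow]
    field_simp
  · rw [mul_assoc, ← mul_pow, huR, one_pow, mul_one]

end HasQSeries

namespace IsWeakGamma0Form

variable {D N : ℕ} {χ : ℤ → ℂ} {k l : ℤ} {f f' A : ℍ → ℂ} {p p' u : ℂ⟦X⟧}

lemma sub (h : IsWeakGamma0Form D χ k N f p) (h' : IsWeakGamma0Form D χ k N f' p') :
    IsWeakGamma0Form D χ k N (f - f') (p - p') where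
  slash_eq γ hγ := by
    rw [sub_eq_add_neg, SlashAction.add_slash, SlashAction.neg_slash, h.slash_eq γ hγ,
      h'.slash_eq γ hγ, smul_add, smul_neg]
  isBoundedAtImInfty_slash γ hγ := by
    rw [sub_eq_add_neg, SlashAction.add_slash, SlashAction.neg_slash]
    exact (h.isBoundedAtImInfty_slash γ hγ).add (h'.isBoundedAtImInfty_slash γ hγ).neg_left
  hasQSeries := by
    rw [sub_mul]
    exact h.hasQSeries.sub h'.hasQSeries

lemma isGamma0Form (h : IsWeakGamma0Form D χ k N f p) (hf : HasQSeries f u) :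
    IsGamma0Form D χ k f := by
  refine ⟨hf.mdifferentiable, h.slash_eq, fun γ => ?_⟩
  by_cases hγ : (D : ℤ) ∣ γ 1 0
  · rw [h.slash_eq γ hγ]
    exact (hf.smul _).isBoundedAtImInfty
  · exact h.isBoundedAtImInfty_slash γ hγ

lemma isGamma0Form_mul_pow (h : IsWeakGamma0Form D χ k N f p) (hA : IsGamma0Form D 1 l A)
    (hAu : HasQSeries A (u * X)) : IsGamma0Form D χ (k + l * N) (f * A ^ N) := by
  have hfA := h.hasQSeries.mul_pow_of_mul_cuspParam_pow hAu
  have hslash (γ : SL(2, ℤ)) (hγ : (D : ℤ) ∣ γ 1 0) :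
      (f * A ^ N) ∣[k + l * N] γ = χ (γ 1 1) • (f * A ^ N) := by
    rw [ModularForm.mul_slash_SL2, pow_slash, h.slash_eq γ hγ,
      hA.slash_eq_self (mem_Gamma0_iff_dvd.2 hγ), smul_mul_assoc]
  refine ⟨hfA.mdifferentiable, hslash, fun γ => ?_⟩
  by_cases hγ : (D : ℤ) ∣ γ 1 0
  · rw [hslash γ hγ]
    exact (hfA.smul _).isBoundedAtImInfty
  · rw [ModularForm.mul_slash_SL2, pow_slash]
    have hpow : (A ∣[l] γ) ^ N ∈ boundedHolomorphic :=
      pow_mem (show A ∣[l] γ ∈ boundedHolomorphic from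
        ⟨mdifferentiable_slash hA.mdifferentiable l γ, hA.isBoundedAtImInfty_slash γ⟩) N
    exact (h.isBoundedAtImInfty_slash γ hγ).mul hpow.2

section Galois

variable [NeZero D] (h : IsWeakGamma0Form D χ k N f p) (hχ : IsQuadDirChar D χ) (σ : ℂ →+* ℂ)
include h hχ

lemma exists_galois_mul_pow (hA : IsGamma0Form D 1 l A) (hAu : HasQSeries A (u * X))
    (hu : u ∈ rationalSeries) :
    ∃ F, IsGamma0Form D χ (k + l * N) F ∧ HasQSeries F (p.map σ * u ^ N) := by
  obtain ⟨F, hF, hFQ⟩ := (h.isGamma0Form_mul_pow hA hAu).exists_galois_conjugate hχ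
    (h.hasQSeries.mul_pow_of_mul_cuspParam_pow hAu) σ
  rw [map_mul, map_pow, map_eq_self_of_mem_rationalSeries σ hu] at hFQ
  exact ⟨F, hF, hFQ⟩

/-- The discriminant controls the conjugate on `ℍ` and at `∞`, `cuspSeparator D` controls it at the
other cusps. -/
theorem exists_galois_conjugate : ∃ f', IsWeakGamma0Form D χ k N f' (p.map σ) := by
  have hΔ : IsGamma0Form D 1 12 ModularForm.discriminant := isGamma0Form_of_modularForm
    (fun _ _ => rfl) (CuspForm.toModularFormₗ CuspForm.discriminant)
  have hH := isGamma0Form_cuspSeparator D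
  obtain ⟨δ, hδ, hδX⟩ := exists_mem_rationalSeries_mul_X_eq
    qExpansion_discriminant_mem_rationalSeries
    (coeff_of_lt_order 0 (by simp [ModularForm.discriminant_qExpansion_order]))
  obtain ⟨u, hu, huX⟩ := exists_mem_rationalSeries_mul_X_eq
    (divisorSeries_mem_rationalSeries (exists_rat_eq_notDvdIndicator (D := D)) 4)
    (by simp [divisorSeries])
  have hΔδ := hδX ▸ hasQSeries_discriminant
  have hHu := huX ▸ hasQSeries_cuspSeparator D
  have hδ1 : δ.coeff 0 = 1 := by
    rw [← ModularForm.discriminant_qExpansion_coeff_one, ← hδX, ← zero_add 1, coeff_succ_mul_X]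
  have hΔ0 := ModularForm.discriminant_ne_zero
  obtain ⟨F, hF, hFQ⟩ := h.exists_galois_mul_pow hχ σ hΔ hΔδ hδ
  obtain ⟨F', hF', hF'Q⟩ := h.exists_galois_mul_pow hχ σ hH hHu hu
  obtain ⟨f', rfl⟩ : ∃ f', F = f' * ModularForm.discriminant ^ N :=
    ⟨F / ModularForm.discriminant ^ N, by ext τ; simp [hΔ0]⟩
  have hf' := hFQ.mul_cuspParam_pow_of_mul_pow hΔδ hδ1 hΔ0
  obtain rfl : f' * cuspSeparator D ^ N = F' :=
    (hf'.mul_pow_of_mul_cuspParam_pow hHu).fun_unique hF'Q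
  refine ⟨f', fun γ hγ => ?_, fun γ hγ => ?_, hf'⟩
  · have hslash := hF.slash_eq γ hγ
    rw [ModularForm.mul_slash_SL2, pow_slash, hΔ.slash_eq_self (mem_Gamma0_iff_dvd.2 hγ),
      ← smul_mul_assoc] at hslash
    exact funext fun τ => mul_right_cancel₀ (pow_ne_zero N (hΔ0 τ)) (congrFun hslash τ)
  · obtain ⟨ε, hε, A, hA⟩ := exists_forall_le_norm_cuspSeparator_slash hγ
    have hbdd := hF'.isBoundedAtImInfty_slash γ
    rw [ModularForm.mul_slash_SL2, pow_slash] at hbdd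
    exact isBoundedAtImInfty_of_mul_pow hε hA hbdd

/-- The difference of `f` and its conjugate has no pole, hence vanishes. -/
theorem map_eq_self (hk : k ≤ 0) (hp : ∀ m < N, σ (p.coeff m) = p.coeff m)
    (hpN : k = 0 → σ (p.coeff N) = p.coeff N) : p.map σ = p := by
  obtain ⟨f', h'⟩ := h.exists_galois_conjugate hχ σ
  obtain ⟨R, hR⟩ : X ^ N ∣ p - p.map σ := X_pow_dvd_iff.2 fun m hm => by
    rw [map_sub, coeff_map, hp m hm, sub_self]
  have hdiff := h.sub h'
  have hRQ : HasQSeries (f - f') R := .of_mul_cuspParam_pow (N := N) <| by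
    rw [mul_comm R, ← hR]
    exact hdiff.hasQSeries
  have hzero : f - f' = 0 := by
    refine (hdiff.isGamma0Form hRQ).eq_zero_of_weight_nonpos hχ hk fun hk0 =>
      hRQ.isZeroAtImInfty ?_
    have hcoeff := congrArg (coeff N) hR
    rwa [map_sub, coeff_map, hpN hk0, sub_self, coeff_X_pow_mul', if_pos le_rfl, Nat.sub_self,
      eq_comm] at hcoeff
  rw [sub_eq_zero.1 hzero] at h
  exact h'.hasQSeries.unique h.hasQSeries

end Galois

end IsWeakGamma0Form

end WeakForms

/-! ### The character `χ_k` -/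

section Character

variable {D : ℕ}

lemma odd_oddRep (hD : Odd D) (a : ℤ) : Odd (oddRep D a) := by
  rw [Nat.odd_iff] at hD ⊢
  unfold oddRep
  split_ifs with h
  · exact h
  · omega

lemma oddRep_emod [NeZero D] (a : ℤ) : (oddRep D a : ℤ) % D = a % D := by
  have hnonneg : 0 ≤ a % (D : ℤ) := Int.emod_nonneg _ (by exact_mod_cast NeZero.ne D)
  unfold oddRep
  split_ifs
  · rw [Int.toNat_of_nonneg hnonneg, Int.emod_emod]
  · rw [Nat.cast_add, Int.toNat_of_nonneg hnonneg, Int.add_emod_right, Int.emod_emod]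

lemma chiK_eq_jacobiSym (hD : D % 4 = 3) (a : ℤ) : chiK D a = jacobiSym a D := by
  have : NeZero D := ⟨by omega⟩
  have hDodd : Odd D := Nat.odd_iff.2 (by omega)
  have hodd := odd_oddRep hDodd a
  have hrep : jacobiSym (oddRep D a) D = jacobiSym a D := by
    rw [jacobiSym.mod_left, oddRep_emod, ← jacobiSym.mod_left]
  rw [← hrep, chiK, jacobiSym.neg _ hodd]
  rcases Nat.odd_mod_four_iff.1 (Nat.odd_iff.1 hodd) with h | h
  · rw [ZMod.χ₄_nat_one_mod_four h, one_mul,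
      jacobiSym.quadratic_reciprocity_one_mod_four' hDodd h]
  · rw [ZMod.χ₄_nat_three_mod_four h, jacobiSym.quadratic_reciprocity_three_mod_four hD h,
      neg_one_mul, neg_neg]

lemma isQuadDirChar_jacobiSym [NeZero D] : IsQuadDirChar D fun a => (jacobiSym a D : ℂ) where
  periodic a := by rw [jacobiSym.mod_left, Int.add_emod_right, ← jacobiSym.mod_left]
  mul a b := by rw [jacobiSym.mul_left, Int.cast_mul]
  eq_zero_iff a := by
    rw [Int.cast_eq_zero, jacobiSym.eq_zero_iff_not_coprime, Int.isCoprime_iff_gcd_eq_one]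
  sq_vals a := by exact_mod_cast jacobiSym.trichotomy a D

namespace IsQuadDirChar

variable {χ : ℤ → ℂ}

lemma pow (hχ : IsQuadDirChar D χ) {n : ℕ} (hn : n ≠ 0) :
    IsQuadDirChar D fun a => χ a ^ n where
  periodic a := by rw [hχ.periodic]
  mul a b := by rw [hχ.mul, mul_pow]
  eq_zero_iff a := by rw [pow_eq_zero_iff hn, hχ.eq_zero_iff]
  sq_vals a := by
    rcases hχ.sq_vals a with h | h | h <;> rw [h]
    · exact .inl (zero_pow hn)
    · exact .inr (.inl (one_pow n))
    · exact .inr (neg_one_pow_eq_or ℂ n)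

end IsQuadDirChar

lemma isQuadDirChar_chiK (hD : D % 4 = 3) : IsQuadDirChar D fun a => (chiK D a : ℂ) := by
  have : NeZero D := ⟨by omega⟩
  simpa only [chiK_eq_jacobiSym hD] using isQuadDirChar_jacobiSym

end Character

/-! ### Rationality of the Fourier coefficients -/

section Rationality

open Function Cardinal
open UpperHalfPlane hiding I
open scoped MatrixGroups ModularForm

lemma SL_slash_eq_slash (w : ℤ) (f : ℂ → ℂ) (γ : SL(2, ℤ)) (τ : ℍ) :
    ((fun z : ℍ => f z) ∣[w] γ) τ = slash w (matR γ) f τ := by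
  have hdet : (matR γ).det = 1 := by
    rw [matR, ← Int.coe_castRingHom, ← RingHom.mapMatrix_apply, ← RingHom.map_det, γ.det_coe,
      map_one]
  rw [ModularForm.SL_slash_apply, slash, hdet, Real.sqrt_one, Complex.ofReal_one, one_zpow,
    one_mul, mul_comm, ModularGroup.denom_apply, UpperHalfPlane.specialLinearGroup_apply]
  simp [matR]

lemma hasSum_shift_mul_pow {q z : ℂ} (hq : q ≠ 0) {c : ℤ → ℂ} {N : ℕ}
    (hN : ∀ m : ℤ, m < -N → c m = 0) (h : HasSum (fun m : ℤ => c m * q ^ m) z) :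
    HasSum (fun i : ℕ => c (i - N) * q ^ i) (z * q ^ N) := by
  have hinj : Injective fun i : ℕ => (i : ℤ) - N := fun i j hij => by simpa using hij
  have hsum := h.mul_right (q ^ N)
  rw [← hinj.hasSum_iff] at hsum
  · convert! hsum using 1
    ext i
    rw [comp_apply, mul_assoc, ← zpow_natCast q N, ← zpow_add₀ hq, sub_add_cancel, zpow_natCast]
  · intro m hm
    rw [hN m, zero_mul, zero_mul]
    by_contra hlt
    exact hm ⟨(m + N).toNat, by simp only; omega⟩

namespace IsWeaklyHolInfty

variable {D : ℕ} {χ : ℤ → ℂ} {w : ℤ} {f : ℂ → ℂ} {c : ℤ → ℂ}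

lemma isWeakGamma0Form (h : IsWeaklyHolInfty D χ w f c) {N : ℕ}
    (hN : ∀ m : ℤ, m < -N → c m = 0) :
    IsWeakGamma0Form D χ w N (fun z : ℍ => f z) (PowerSeries.mk fun i => c (i - N)) where
  slash_eq γ hγ := by
    ext τ
    rw [SL_slash_eq_slash, h.transform γ hγ τ τ.im_pos]
    rfl
  isBoundedAtImInfty_slash γ hγ := by
    obtain ⟨C, hC⟩ := h.bdd_at_other_cusps γ hγ
    refine isBoundedAtImInfty_iff.2 ⟨C, 1, fun τ hτ => ?_⟩
    rw [SL_slash_eq_slash]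
    exact hC τ hτ
  hasQSeries τ := by
    have hexp (m : ℤ) : Complex.exp (2 * (Real.pi : ℂ) * Complex.I * m * τ) =
        Periodic.qParam 1 (τ : ℂ) ^ m := by
      rw [Periodic.qParam, ← Complex.exp_int_mul]
      congr 1
      push_cast
      ring
    have hfourier := h.fourier τ τ.im_pos
    simp only [hexp] at hfourier
    simp only [PowerSeries.coeff_mk]
    exact hasSum_shift_mul_pow (Periodic.qParam_ne_zero _) hN hfourier

end IsWeaklyHolInfty

theorem fourier_coefficients_rational_general {D : ℕ} [NeZero D] {χ : ℤ → ℂ}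
    (hχ : IsQuadDirChar D χ) {w : ℤ} (hw : w ≤ 0) {f : ℂ → ℂ} {c : ℤ → ℂ}
    (hf : IsWeaklyHolInfty D χ w f c) (hc : ∀ m < 0, ∃ q : ℚ, c m = q)
    (hc0 : w = 0 → ∃ q : ℚ, c 0 = q) (m : ℤ) : ∃ q : ℚ, c m = q := by
  obtain ⟨m₀, hm₀⟩ := hf.coeff_bddBelow
  set N := m₀.toNat
  have hN (m : ℤ) (hm : m < -N) : c m = 0 := hm₀ m (by omega)
  rcases lt_or_ge m (-N) with hm | hm
  · exact ⟨0, by rw [hN m hm, Rat.cast_zero]⟩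
  obtain ⟨i, rfl⟩ : ∃ i : ℕ, m = i - N := ⟨(m + N).toNat, by omega⟩
  refine exists_rat_eq_of_forall_ringEquiv_apply_eq (by simp [aleph0_lt_continuum]) fun σ => ?_
  have hfix := (hf.isWeakGamma0Form hN).map_eq_self hχ (σ : ℂ →+* ℂ) hw
    (fun j hj => by
      obtain ⟨q, hq⟩ := hc (j - N) (by omega)
      rw [PowerSeries.coeff_mk, hq, map_ratCast])
    (fun hw0 => by
      obtain ⟨q, hq⟩ := hc0 hw0
      rw [PowerSeries.coeff_mk, sub_self, hq, map_ratCast])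
  simpa only [PowerSeries.coeff_map, PowerSeries.coeff_mk, RingHom.coe_coe] using
    congrArg (PowerSeries.coeff i) hfix

end Rationality

/-- If `f ∈ M^{!,∞}_{2-n}(D, χ_k^{n-2})` has integral Fourier coefficients `c(m)` for `m ≤ 0`,
then all of its Fourier coefficients are rational. -/
theorem fourier_coefficients_rational
    (D : ℕ) (hD : Odd D) (hDsf : Squarefree D) (hD4 : D % 4 = 3)
    (n : ℕ) (hn : 3 ≤ n)
    (f : ℂ → ℂ) (c : ℤ → ℂ)
    (hf : IsWeaklyHolInfty D (fun a => ((chiK D a : ℤ) : ℂ) ^ (n - 2)) (2 - (n : ℤ)) f c)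
    (hcint : ∀ m : ℤ, m ≤ 0 → ∃ z : ℤ, c m = (z : ℂ)) :
    ∀ m : ℤ, ∃ q : ℚ, c m = (q : ℂ) := by
  have : NeZero D := ⟨hD.pos.ne'⟩
  have hrat (m : ℤ) (hm : m ≤ 0) : ∃ q : ℚ, c m = q := by
    obtain ⟨z, hz⟩ := hcint m hm
    exact ⟨z, by rw [hz, Rat.cast_intCast]⟩
  exact fourier_coefficients_rational_general ((isQuadDirChar_chiK hD4).pow (by omega))
    (by omega) hf (fun m hm => hrat m hm.le) fun _ => hrat 0 le_rfl
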